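/- In a braided quantum group, the braiding σ and the secondary braiding τ satisfy the full system of braid relations: for any α, β, γ ∈ {σ, τ} with (α,β,γ) in the admissible combinations listed—(σ,σ,σ), (τ,σ,σ) = (σ,σ,τ)-reversed, (σ,τ,σ), (σ,σ,τ), (τ,τ,σ), (τ,σ,τ), (σ,τ,τ), (τ,τ,τ)—the equation (α⊗id)(id⊗β)(γ⊗id) = (id⊗γ)(β⊗id)(id⊗α) holds. In particular, σ satisfies the braid equation (σ⊗id)(id⊗σ)(σ⊗id) = (id⊗σ)(σ⊗id)(id⊗σ), and τ satisfies (τ⊗id)(id⊗τ)(τ⊗id) = (id⊗τ)(τ⊗id)(id⊗τ). -/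

import Mathlib

open TensorProduct LinearMap

noncomputable section

variable (A : Type*) [Ring A] [Algebra ℂ A]

/-- Two-fold tensor product of `A` with itself. -/
abbrev T2 := A ⊗[ℂ] A
/-- Three-fold tensor product (right associated). -/
abbrev T3 := A ⊗[ℂ] (A ⊗[ℂ] A)
/-- Four-fold tensor product (right associated). -/
abbrev T4 := A ⊗[ℂ] (A ⊗[ℂ] (A ⊗[ℂ] A))

variable {A}

/-- The multiplication of `A` as a linear map. -/
def mA : T2 A →ₗ[ℂ] A := LinearMap.mul' ℂ A

/-- `f ⊗ id` : a map of `T2` acting on the factors 1,2 of `T3`. -/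
def op12 (f : T2 A →ₗ[ℂ] T2 A) : T3 A →ₗ[ℂ] T3 A :=
  (TensorProduct.assoc ℂ A A A).toLinearMap ∘ₗ f.rTensor A ∘ₗ
    (TensorProduct.assoc ℂ A A A).symm.toLinearMap

/-- `id ⊗ f` : a map of `T2` acting on the factors 2,3 of `T3`. -/
def op23 (f : T2 A →ₗ[ℂ] T2 A) : T3 A →ₗ[ℂ] T3 A := f.lTensor A

/-- `f ⊗ id ⊗ id` : a map of `T2` acting on the factors 1,2 of `T4`. -/
def op12_4 (f : T2 A →ₗ[ℂ] T2 A) : T4 A →ₗ[ℂ] T4 A :=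
  (TensorProduct.assoc ℂ A A (T2 A)).toLinearMap ∘ₗ f.rTensor (T2 A) ∘ₗ
    (TensorProduct.assoc ℂ A A (T2 A)).symm.toLinearMap

/-- `id ⊗ f ⊗ id` : a map of `T2` acting on the factors 2,3 of `T4`. -/
def op23_4 (f : T2 A →ₗ[ℂ] T2 A) : T4 A →ₗ[ℂ] T4 A := (op12 f).lTensor A

/-- `id ⊗ id ⊗ f` : a map of `T2` acting on the factors 3,4 of `T4`. -/
def op34_4 (f : T2 A →ₗ[ℂ] T2 A) : T4 A →ₗ[ℂ] T4 A := (f.lTensor A).lTensor A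

/-- `m ⊗ id : T3 → T2`. -/
def m12 : T3 A →ₗ[ℂ] T2 A :=
  (mA (A := A)).rTensor A ∘ₗ (TensorProduct.assoc ℂ A A A).symm.toLinearMap

/-- `id ⊗ m : T3 → T2`. -/
def m23 : T3 A →ₗ[ℂ] T2 A := (mA (A := A)).lTensor A

/-- `m ⊗ m : T4 → T2`. -/
def mm : T4 A →ₗ[ℂ] T2 A := m12 ∘ₗ ((mA (A := A)).lTensor A).lTensor A

/-- A braided quantum group structure on the algebra `A` (Đurđević).
`φ` is the coproduct, `ε` the counit, `κ` the antipode, `σ` the braiding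
(with given inverse `σ'`). -/
structure BQG (A : Type*) [Ring A] [Algebra ℂ A] where
  φ : A →ₗ[ℂ] T2 A
  ε : A →ₗ[ℂ] ℂ
  κ : A →ₗ[ℂ] A
  σ : T2 A →ₗ[ℂ] T2 A
  σ' : T2 A →ₗ[ℂ] T2 A
  σ_comp : σ ∘ₗ σ' = LinearMap.id
  comp_σ : σ' ∘ₗ σ = LinearMap.id
  κ_bij : Function.Bijective κ
  /-- coassociativity `(φ⊗id)φ = (id⊗φ)φ` -/
  coassoc : (TensorProduct.assoc ℂ A A A).toLinearMap ∘ₗ φ.rTensor A ∘ₗ φ = φ.lTensor A ∘ₗ φ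
  /-- `(ε⊗id)φ = id` -/
  counit_left : (TensorProduct.lid ℂ A).toLinearMap ∘ₗ ε.rTensor A ∘ₗ φ = LinearMap.id
  /-- `(id⊗ε)φ = id` -/
  counit_right : (TensorProduct.rid ℂ A).toLinearMap ∘ₗ ε.lTensor A ∘ₗ φ = LinearMap.id
  /-- `σ(m⊗id) = (id⊗m)(σ⊗id)(id⊗σ)` -/
  braid_mul_left : σ ∘ₗ m12 = m23 ∘ₗ op12 σ ∘ₗ op23 σ
  /-- `σ(id⊗m) = (m⊗id)(id⊗σ)(σ⊗id)` -/
  braid_mul_right : σ ∘ₗ m23 = m12 ∘ₗ op23 σ ∘ₗ op12 σ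
  /-- `φm = (m⊗m)(id⊗σ⊗id)(φ⊗φ)` -/
  comul_mul : φ ∘ₗ mA = mm ∘ₗ op23_4 σ ∘ₗ
      (TensorProduct.assoc ℂ A A (T2 A)).toLinearMap ∘ₗ φ.rTensor (T2 A) ∘ₗ φ.lTensor A
  /-- `(σ⊗id²)(id⊗φ⊗id)(σ⁻¹⊗id)(id⊗φ) = (id²⊗σ)(id⊗φ⊗id)(id⊗σ⁻¹)(φ⊗id)` -/
  mixed_coassoc :
    op12_4 σ ∘ₗ ((TensorProduct.assoc ℂ A A A).toLinearMap ∘ₗ φ.rTensor A).lTensor A ∘ₗ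
        op12 σ' ∘ₗ φ.lTensor A
      = op34_4 σ ∘ₗ ((TensorProduct.assoc ℂ A A A).toLinearMap ∘ₗ φ.rTensor A).lTensor A ∘ₗ
        op23 σ' ∘ₗ (TensorProduct.assoc ℂ A A A).toLinearMap ∘ₗ φ.rTensor A
  /-- `m(κ⊗id)φ = 1ε` -/
  antipode_left : mA ∘ₗ κ.rTensor A ∘ₗ φ = Algebra.linearMap ℂ A ∘ₗ ε
  /-- `m(id⊗κ)φ = 1ε` -/
  antipode_right : mA ∘ₗ κ.lTensor A ∘ₗ φ = Algebra.linearMap ℂ A ∘ₗ ε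

namespace BQG

variable {A : Type*} [Ring A] [Algebra ℂ A] (G : BQG A)

/-- `φ ⊗ id : T2 → T3`. -/
def φ1 : T2 A →ₗ[ℂ] T3 A := (TensorProduct.assoc ℂ A A A).toLinearMap ∘ₗ G.φ.rTensor A

/-- `id ⊗ φ : T2 → T3`. -/
def φ2 : T2 A →ₗ[ℂ] T3 A := G.φ.lTensor A

/-- `id² ⊗ ε : T3 → T2`. -/
def ε3r : T3 A →ₗ[ℂ] T2 A :=
  ((TensorProduct.rid ℂ A).toLinearMap ∘ₗ G.ε.lTensor A).lTensor A

/-- `ε ⊗ id² : T3 → T2`. -/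
def ε3l : T3 A →ₗ[ℂ] T2 A :=
  (TensorProduct.lid ℂ (T2 A)).toLinearMap ∘ₗ G.ε.rTensor (T2 A)

/-- The secondary braiding `τ = (id²⊗ε)(id⊗σ⁻¹)(φ⊗id)σ`. -/
def τ : T2 A →ₗ[ℂ] T2 A := G.ε3r ∘ₗ op23 G.σ' ∘ₗ G.φ1 ∘ₗ G.σ

/-- `ε ⊗ ε : T2 → ℂ`. -/
def εε : T2 A →ₗ[ℂ] ℂ :=
  (TensorProduct.lid ℂ ℂ).toLinearMap ∘ₗ G.ε.rTensor ℂ ∘ₗ G.ε.lTensor A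

end BQG

/-!
The operators `σ⁻¹τ`, `τ⁻¹σ` and `τσ⁻¹` all have the form `u ⊗ v ↦ u₁ ⊗ a(u₂, v₁) v₂` for a
functional `a` of two strands, so by coassociativity they commute when they act on adjacent pairs
of strands. For `σ⁻¹τ` the functional is `ε m`, and since `τ` is compatible with the product and
with the coproduct, `(id⊗τ)(τ⊗id)` and `(τ⊗id)(id⊗τ)` carry `σ⁻¹τ` from one pair of strands to the
other. The equations for `(σ, σ, τ)` and `(σ, τ, τ)` come from expanding `(φ⊗id)α(id⊗m)`, for
`α = σ` and `α = τ`, in two ways, moving `α` past `m` first or past `φ` first, and cancelling with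
the antipode. The other six equations follow from these facts in any group: `σ` differs from `τ` by
factors that commute with each other and are permuted by conjugation with `τ`.
-/

theorem mul_mul_of_semiconjBy {S : Type*} [Semigroup S] {a x y : S} (h : SemiconjBy a x y)
    (z : S) : a * (x * z) = y * (a * z) := by
  rw [← mul_assoc, h.eq, mul_assoc]

/-- Four group elements related as the two strand positions of a braiding `σ` and of a secondary
braiding `τ`: `sᵢ` and `tᵢ` stand for `σ` and `τ` acting on the strands `i` and `i + 1`. -/
structure BraidingPair {H : Type*} [Group H] (s₁ s₂ t₁ t₂ : H) : Prop where
  braid_braid_secondary : s₁ * s₂ * t₁ = t₂ * s₁ * s₂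
  braid_secondary_secondary : s₁ * t₂ * t₁ = t₂ * t₁ * s₂
  semiconj₂₁ : SemiconjBy (t₂ * t₁) (s₂⁻¹ * t₂) (s₁⁻¹ * t₁)
  semiconj₁₂ : SemiconjBy (t₁ * t₂) (s₁⁻¹ * t₁) (s₂⁻¹ * t₂)
  commute_right_right : Commute (t₁ * s₁⁻¹) (t₂ * s₂⁻¹)
  commute_left_right : Commute (s₁⁻¹ * t₁) (t₂ * s₂⁻¹)
  commute_right_left : Commute (t₁ * s₁⁻¹) (s₂⁻¹ * t₂)

namespace BraidingPair

variable {H : Type*} [Group H] {s₁ s₂ t₁ t₂ : H} (h : BraidingPair s₁ s₂ t₁ t₂)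

include h

theorem semiconj_braid₂₁ : SemiconjBy (t₂ * t₁) s₂ s₁ := by
  simpa only [SemiconjBy, mul_assoc] using h.braid_secondary_secondary.symm

theorem semiconj_secondary₂₁ : SemiconjBy (t₂ * t₁) t₂ t₁ := by
  simpa only [mul_inv_cancel_left] using h.semiconj_braid₂₁.mul_right h.semiconj₂₁

theorem secondary_secondary_secondary : t₁ * t₂ * t₁ = t₂ * t₁ * t₂ := by
  rw [h.semiconj_secondary₂₁.eq, mul_assoc]

theorem semiconj_secondary₁₂ : SemiconjBy (t₁ * t₂) t₁ t₂ := by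
  rw [SemiconjBy, h.secondary_secondary_secondary, mul_assoc]

theorem semiconj_braid₁₂ : SemiconjBy (t₁ * t₂) s₁ s₂ := by
  simpa only [mul_inv_rev, inv_inv, mul_inv_cancel_left]
    using h.semiconj_secondary₁₂.mul_right h.semiconj₁₂.inv_right

theorem secondary_secondary_braid : t₁ * t₂ * s₁ = s₂ * t₁ * t₂ := by
  rw [h.semiconj_braid₁₂.eq, mul_assoc]

theorem semiconj_ratio₂₁ : SemiconjBy (t₂ * t₁) (s₂ * t₂⁻¹) (s₁ * t₁⁻¹) :=
  h.semiconj_braid₂₁.mul_right h.semiconj_secondary₂₁.inv_right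

theorem semiconj_ratio₁₂ : SemiconjBy (t₁ * t₂) (s₁ * t₁⁻¹) (s₂ * t₂⁻¹) :=
  h.semiconj_braid₁₂.mul_right h.semiconj_secondary₁₂.inv_right

theorem commute_ratio : Commute (s₁ * t₁⁻¹) (s₂ * t₂⁻¹) := by
  simpa only [mul_inv_rev, inv_inv] using h.commute_right_right.inv_inv

theorem commute_ratio_conj₁ : Commute (s₁ * t₁⁻¹) (t₁ * (s₂ * t₂⁻¹) * t₁⁻¹) := by
  simpa only [mul_inv_rev, inv_inv, mul_inv_cancel_left] using h.commute_left_right.inv_inv.conj t₁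

theorem commute_ratio_conj₂ : Commute (s₂ * t₂⁻¹) (t₂ * (s₁ * t₁⁻¹) * t₂⁻¹) := by
  simpa only [mul_inv_rev, inv_inv, mul_inv_cancel_left]
    using h.commute_right_left.symm.inv_inv.conj t₂

/-- The commuting elements are `n₁ = s₁ t₁⁻¹`, `n₂ = s₂ t₂⁻¹` and `c = t₁ n₂ t₁⁻¹`. -/
theorem exists_commuting : ∃ n₁ n₂ c : H, s₁ = n₁ * t₁ ∧ s₂ = n₂ * t₂ ∧
    Commute n₁ n₂ ∧ Commute n₁ c ∧ Commute n₂ c ∧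
    SemiconjBy t₁ n₂ c ∧ SemiconjBy t₁ c n₂ ∧ SemiconjBy t₂ n₁ c ∧ SemiconjBy t₂ c n₁ := by
  obtain ⟨n₁, rfl⟩ : ∃ n₁, s₁ = n₁ * t₁ := ⟨s₁ * t₁⁻¹, (inv_mul_cancel_right s₁ t₁).symm⟩
  obtain ⟨n₂, rfl⟩ : ∃ n₂, s₂ = n₂ * t₂ := ⟨s₂ * t₂⁻¹, (inv_mul_cancel_right s₂ t₂).symm⟩
  obtain ⟨c, hc⟩ : ∃ c, SemiconjBy t₁ n₂ c := ⟨_, .conj_mk t₁ n₂⟩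
  obtain ⟨d, hd⟩ : ∃ d, SemiconjBy t₂ n₁ d := ⟨_, .conj_mk t₂ n₁⟩
  have h₂₁ : SemiconjBy (t₂ * t₁) n₂ n₁ := by
    simpa only [mul_inv_cancel_right] using h.semiconj_ratio₂₁
  have h₁₂ : SemiconjBy (t₁ * t₂) n₁ n₂ := by
    simpa only [mul_inv_cancel_right] using h.semiconj_ratio₁₂
  have hc' : SemiconjBy t₂ c n₁ := by
    simpa only [mul_inv_cancel_right] using h₂₁.mul_left hc.inv_symm_left
  have hd' : SemiconjBy t₁ d n₂ := by
    simpa only [mul_inv_cancel_right] using h₁₂.mul_left hd.inv_symm_left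
  have comm : Commute n₁ n₂ := by
    simpa only [mul_inv_cancel_right] using h.commute_ratio
  have comm_c : Commute n₁ c := by
    simpa only [mul_inv_cancel_right, hc.eq] using h.commute_ratio_conj₁
  have comm_d : Commute n₂ d := by
    simpa only [mul_inv_cancel_right, hd.eq] using h.commute_ratio_conj₂
  have hcd : c = d := by
    refine mul_right_cancel (b := n₁) (mul_right_cancel (b := t₂ * t₁ * t₂) ?_)
    calc c * n₁ * (t₂ * t₁ * t₂) = n₁ * t₁ * (n₂ * t₂) * t₁ := by
          rw [← comm_c.eq, ← h.secondary_secondary_secondary]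
          simp only [mul_assoc, mul_mul_of_semiconjBy hc]
      _ = t₂ * (n₁ * t₁) * (n₂ * t₂) := h.braid_braid_secondary
      _ = d * n₁ * (t₂ * t₁ * t₂) := by
          simp only [mul_assoc, mul_mul_of_semiconjBy hc, mul_mul_of_semiconjBy hc',
            mul_mul_of_semiconjBy hd]
  subst hcd
  exact ⟨n₁, n₂, c, rfl, rfl, comm, comm_c, comm_d, hc, hd', hd, hc'⟩

theorem braid_braid_braid : s₁ * s₂ * s₁ = s₂ * s₁ * s₂ := by
  obtain ⟨n₁, n₂, c, rfl, rfl, comm, comm₁, comm₂, h₁, h₁', h₂, h₂'⟩ := h.exists_commuting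
  calc n₁ * t₁ * (n₂ * t₂) * (n₁ * t₁)
      = n₁ * (c * n₂) * (t₁ * t₂ * t₁) := by
        simp only [mul_assoc, mul_mul_of_semiconjBy h₁, mul_mul_of_semiconjBy h₁',
          mul_mul_of_semiconjBy h₂]
    _ = n₂ * (c * n₁) * (t₂ * t₁ * t₂) := by
        rw [h.secondary_secondary_secondary, ← comm₂.eq, ← comm₁.eq, comm.left_comm]
    _ = n₂ * t₂ * (n₁ * t₁) * (n₂ * t₂) := by
        simp only [mul_assoc, mul_mul_of_semiconjBy h₁, mul_mul_of_semiconjBy h₂,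
          mul_mul_of_semiconjBy h₂']

theorem secondary_braid_braid : t₁ * s₂ * s₁ = s₂ * s₁ * t₂ := by
  obtain ⟨n₁, n₂, c, rfl, rfl, -, -, comm₂, h₁, h₁', h₂, -⟩ := h.exists_commuting
  calc t₁ * (n₂ * t₂) * (n₁ * t₁)
      = c * n₂ * (t₁ * t₂ * t₁) := by
        simp only [mul_assoc, mul_mul_of_semiconjBy h₁, mul_mul_of_semiconjBy h₁',
          mul_mul_of_semiconjBy h₂]
    _ = n₂ * c * (t₂ * t₁ * t₂) := by rw [h.secondary_secondary_secondary, comm₂.eq]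
    _ = n₂ * t₂ * (n₁ * t₁) * t₂ := by simp only [mul_assoc, mul_mul_of_semiconjBy h₂]

theorem braid_secondary_braid : s₁ * t₂ * s₁ = s₂ * t₁ * s₂ := by
  obtain ⟨n₁, n₂, c, rfl, rfl, comm, -, -, h₁, h₁', h₂, h₂'⟩ := h.exists_commuting
  calc n₁ * t₁ * t₂ * (n₁ * t₁)
      = n₁ * n₂ * (t₁ * t₂ * t₁) := by
        simp only [mul_assoc, mul_mul_of_semiconjBy h₁', mul_mul_of_semiconjBy h₂]
    _ = n₂ * n₁ * (t₂ * t₁ * t₂) := by rw [h.secondary_secondary_secondary, comm.eq]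
    _ = n₂ * t₂ * t₁ * (n₂ * t₂) := by
        simp only [mul_assoc, mul_mul_of_semiconjBy h₁, mul_mul_of_semiconjBy h₂']

theorem secondary_braid_secondary : t₁ * s₂ * t₁ = t₂ * s₁ * t₂ := by
  obtain ⟨n₁, n₂, c, rfl, rfl, -, -, -, h₁, -, h₂, -⟩ := h.exists_commuting
  calc t₁ * (n₂ * t₂) * t₁
      = c * (t₁ * t₂ * t₁) := by simp only [mul_assoc, mul_mul_of_semiconjBy h₁]
    _ = t₂ * (n₁ * t₁) * t₂ := by
        simp only [h.secondary_secondary_secondary, mul_assoc, mul_mul_of_semiconjBy h₂]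

end BraidingPair

/-- `id ⊗ f`, the operator `f` with one more idle strand on the left. -/
local notation:max "◁" f:max => LinearMap.lTensor _ f

section Strands

variable {R B W X Y Z V V' : Type*} [CommSemiring R]
  [AddCommMonoid B] [Module R B] [AddCommMonoid W] [Module R W] [AddCommMonoid X] [Module R X]
  [AddCommMonoid Y] [Module R Y] [AddCommMonoid Z] [Module R Z] [AddCommMonoid V] [Module R V]
  [AddCommMonoid V'] [Module R V']

section Whisker

/-! `whiskerₘₙ` adds an idle strand to an equation between a composite of `m` maps and a composite
of `n` maps. -/

variable {a : Y →ₗ[R] Z} {b : X →ₗ[R] Y} {c : W →ₗ[R] X}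

theorem whisker₁₁ {a' : Y →ₗ[R] Z} (h : ∀ t, a t = a' t) (t : B ⊗[R] Y) : ◁a t = ◁a' t := by
  rw [LinearMap.ext h]

theorem whisker₂₁ {d : X →ₗ[R] Z} (h : ∀ t, a (b t) = d t) (t : B ⊗[R] X) :
    ◁a (◁b t) = ◁d t := by
  rw [← lTensor_comp_apply]
  exact whisker₁₁ h t

theorem whisker₂₀ {a : Y →ₗ[R] X} (h : ∀ t, a (b t) = t) (t : B ⊗[R] X) : ◁a (◁b t) = t :=
  (whisker₂₁ (d := LinearMap.id) h t).trans (lTensor_id_apply B X t)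

theorem whisker₂₂ {d : V →ₗ[R] Z} {e : X →ₗ[R] V} (h : ∀ t, a (b t) = d (e t)) (t : B ⊗[R] X) :
    ◁a (◁b t) = ◁d (◁e t) := by
  rw [← lTensor_comp_apply B d]
  exact whisker₂₁ h t

theorem whisker₂₃ {d : V →ₗ[R] Z} {e : V' →ₗ[R] V} {f : X →ₗ[R] V'}
    (h : ∀ t, a (b t) = d (e (f t))) (t : B ⊗[R] X) : ◁a (◁b t) = ◁d (◁e (◁f t)) := by
  rw [← lTensor_comp_apply B e]
  exact whisker₂₂ h t

theorem whisker₃₁ {d : W →ₗ[R] Z} (h : ∀ t, a (b (c t)) = d t) (t : B ⊗[R] W) :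
    ◁a (◁b (◁c t)) = ◁d t := by
  rw [← lTensor_comp_apply B b]
  exact whisker₂₁ h t

theorem whisker₃₂ {d : V →ₗ[R] Z} {e : W →ₗ[R] V} (h : ∀ t, a (b (c t)) = d (e t))
    (t : B ⊗[R] W) : ◁a (◁b (◁c t)) = ◁d (◁e t) := by
  rw [← lTensor_comp_apply B d]
  exact whisker₃₁ h t

theorem whisker₃₃ {d : V →ₗ[R] Z} {e : V' →ₗ[R] V} {f : W →ₗ[R] V'}
    (h : ∀ t, a (b (c t)) = d (e (f t))) (t : B ⊗[R] W) :
    ◁a (◁b (◁c t)) = ◁d (◁e (◁f t)) := by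
  rw [← lTensor_comp_apply B e]
  exact whisker₃₂ h t

end Whisker

/-- `f ⊗ id` for an operator `f` on two strands, re-bracketed to act on the first two factors of
`B ⊗ (B ⊗ X)`; for `X = A` this is `op12`. In `headₘₙ` the indices count the incoming and outgoing
strands. -/
def head₂₂ (f : B ⊗[R] B →ₗ[R] B ⊗[R] B) : B ⊗[R] (B ⊗[R] X) →ₗ[R] B ⊗[R] (B ⊗[R] X) :=
  (TensorProduct.assoc R B B X).toLinearMap ∘ₗ f.rTensor X ∘ₗ
    (TensorProduct.assoc R B B X).symm.toLinearMap

/-- `f ⊗ id` for a map `f` merging two strands, such as a multiplication. -/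
def head₂₁ (f : B ⊗[R] B →ₗ[R] B) : B ⊗[R] (B ⊗[R] X) →ₗ[R] B ⊗[R] X :=
  f.rTensor X ∘ₗ (TensorProduct.assoc R B B X).symm.toLinearMap

/-- `f ⊗ id` for a functional `f` of two strands. -/
def head₂₀ (f : B ⊗[R] B →ₗ[R] R) : B ⊗[R] (B ⊗[R] X) →ₗ[R] X :=
  (TensorProduct.lid R X).toLinearMap ∘ₗ f.rTensor X ∘ₗ
    (TensorProduct.assoc R B B X).symm.toLinearMap

/-- `f ⊗ id` for a map `f` splitting a strand in two, such as a coproduct. -/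
def head₁₂ (f : B →ₗ[R] B ⊗[R] B) : B ⊗[R] X →ₗ[R] B ⊗[R] (B ⊗[R] X) :=
  (TensorProduct.assoc R B B X).toLinearMap ∘ₗ f.rTensor X

/-- `f ⊗ id` for a functional `f` of one strand, such as a counit. -/
def head₁₀ (f : B →ₗ[R] R) : B ⊗[R] X →ₗ[R] X :=
  (TensorProduct.lid R X).toLinearMap ∘ₗ f.rTensor X

/-- `b ↦ b ⊗ x`. Applied to the last factor, it turns an element of a tensor power of `B` into an
element of `B ⊗ ⋯ ⊗ (B ⊗ X)`. -/
def append (x : X) : B →ₗ[R] B ⊗[R] X :=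
  (TensorProduct.mk R B X).flip x

theorem assoc_tmul_eq_lTensor_append (u : B ⊗[R] B) (x : X) :
    TensorProduct.assoc R B B X (u ⊗ₜ x) = ◁(append x) u := by
  induction u using TensorProduct.induction_on with
  | zero => simp
  | tmul a b => rfl
  | add u v hu hv => simp only [TensorProduct.add_tmul, map_add, hu, hv]

theorem lTensor_lTensor_comp_append (g : X →ₗ[R] Y) (x : X) (u : B ⊗[R] B) :
    ◁◁g (◁(append x) u) = ◁(append (g x)) u :=
  whisker₂₁ (fun _ => rfl) u

section Append

theorem head₂₂_append (f : B ⊗[R] B →ₗ[R] B ⊗[R] B) (x : X) (u : B ⊗[R] B) :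
    head₂₂ f (◁(append x) u) = ◁(append x) (f u) := by
  simp [head₂₂, ← assoc_tmul_eq_lTensor_append]

theorem head₂₁_append (f : B ⊗[R] B →ₗ[R] B) (x : X) (u : B ⊗[R] B) :
    head₂₁ f (◁(append x) u) = append x (f u) := by
  simp [head₂₁, ← assoc_tmul_eq_lTensor_append]
  rfl

theorem head₂₀_append (f : B ⊗[R] B →ₗ[R] R) (x : X) (u : B ⊗[R] B) :
    head₂₀ f (◁(append x) u) = f u • x := by
  simp [head₂₀, ← assoc_tmul_eq_lTensor_append]

theorem head₁₂_append (f : B →ₗ[R] B ⊗[R] B) (x : X) (b : B) :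
    head₁₂ f (append x b) = ◁(append x) (f b) :=
  assoc_tmul_eq_lTensor_append (f b) x

theorem head₁₀_append (f : B →ₗ[R] R) (x : X) (u : B ⊗[R] B) :
    head₁₀ f (◁(append x) u) = append x (TensorProduct.lid R B (f.rTensor B u)) := by
  induction u using TensorProduct.induction_on with
  | zero => simp
  | tmul a b => simp [head₁₀, append, TensorProduct.smul_tmul']
  | add u v hu hv => simp only [map_add, hu, hv]

theorem lTensor_head₁₀_append (f : B →ₗ[R] R) (x : X) (u : B ⊗[R] B) :
    ◁(head₁₀ f) (◁(append x) u) = append x (TensorProduct.rid R B (f.lTensor B u)) := by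
  induction u using TensorProduct.induction_on with
  | zero => simp
  | tmul a b => simp [head₁₀, append]
  | add u v hu hv => simp only [map_add, hu, hv]

theorem ext_append₁ {f g : B ⊗[R] X →ₗ[R] Y} (h : ∀ x b, f (append x b) = g (append x b))
    (t : B ⊗[R] X) : f t = g t :=
  LinearMap.congr_fun (TensorProduct.ext' fun b x => h x b) t

theorem ext_append₂ {f g : B ⊗[R] (B ⊗[R] X) →ₗ[R] Y}
    (h : ∀ x u, f (◁(append x) u) = g (◁(append x) u)) (t : B ⊗[R] (B ⊗[R] X)) : f t = g t := by
  refine LinearMap.congr_fun (f := f) (g := g) ?_ t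
  ext a b x
  exact h x (a ⊗ₜ b)

theorem ext_append₃ {f g : B ⊗[R] (B ⊗[R] (B ⊗[R] X)) →ₗ[R] Y}
    (h : ∀ x u, f (◁◁(append x) u) = g (◁◁(append x) u)) (t : B ⊗[R] (B ⊗[R] (B ⊗[R] X))) :
    f t = g t := by
  refine LinearMap.congr_fun (f := f) (g := g) ?_ t
  ext a b c x
  exact h x (a ⊗ₜ (b ⊗ₜ c))

theorem rid_append_one (b : B) : (TensorProduct.rid R B).toLinearMap (append 1 b) = b := by
  simp [append]

theorem ext_append_one₂ {f g : V →ₗ[R] B ⊗[R] B}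
    (h : ∀ v, ◁(append (1 : R)) (f v) = ◁(append 1) (g v)) : f = g :=
  LinearMap.ext fun v => Function.LeftInverse.injective (whisker₂₀ rid_append_one) (h v)

theorem ext_append_one₃ {f g : V →ₗ[R] B ⊗[R] (B ⊗[R] B)}
    (h : ∀ v, ◁◁(append (1 : R)) (f v) = ◁◁(append 1) (g v)) : f = g :=
  LinearMap.ext fun v =>
    Function.LeftInverse.injective (whisker₂₀ (whisker₂₀ rid_append_one)) (h v)

end Append

section Naturality

theorem head₂₂_lTensor (f : B ⊗[R] B →ₗ[R] B ⊗[R] B) (g : X →ₗ[R] Y) (t : B ⊗[R] (B ⊗[R] X)) :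
    head₂₂ f (◁◁g t) = ◁◁g (head₂₂ f t) :=
  ext_append₂ (f := head₂₂ f ∘ₗ ◁◁g) (g := ◁◁g ∘ₗ head₂₂ f)
    (fun x u => by simp only [comp_apply, lTensor_lTensor_comp_append, head₂₂_append]) t

theorem head₂₁_lTensor (f : B ⊗[R] B →ₗ[R] B) (g : X →ₗ[R] Y) (t : B ⊗[R] (B ⊗[R] X)) :
    head₂₁ f (◁◁g t) = ◁g (head₂₁ f t) := by
  refine ext_append₂ (f := head₂₁ f ∘ₗ ◁◁g) (g := ◁g ∘ₗ head₂₁ f) (fun x u => ?_) t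
  simp only [comp_apply, lTensor_lTensor_comp_append, head₂₁_append]
  rfl

theorem head₂₀_lTensor (f : B ⊗[R] B →ₗ[R] R) (g : X →ₗ[R] Y) (t : B ⊗[R] (B ⊗[R] X)) :
    head₂₀ f (◁◁g t) = g (head₂₀ f t) :=
  ext_append₂ (f := head₂₀ f ∘ₗ ◁◁g) (g := g ∘ₗ head₂₀ f)
    (fun x u => by
      simp only [comp_apply, lTensor_lTensor_comp_append, head₂₀_append, map_smul]) t

theorem head₁₂_lTensor (f : B →ₗ[R] B ⊗[R] B) (g : X →ₗ[R] Y) (t : B ⊗[R] X) :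
    head₁₂ f (◁g t) = ◁◁g (head₁₂ f t) := by
  refine ext_append₁ (f := head₁₂ f ∘ₗ ◁g) (g := ◁◁g ∘ₗ head₁₂ f) (fun x b => ?_) t
  simp only [comp_apply, head₁₂_append, lTensor_lTensor_comp_append]
  exact head₁₂_append f (g x) b

theorem head₁₀_lTensor (f : B →ₗ[R] R) (g : X →ₗ[R] Y) (t : B ⊗[R] X) :
    head₁₀ f (◁g t) = g (head₁₀ f t) :=
  ext_append₁ (f := head₁₀ f ∘ₗ ◁g) (g := g ∘ₗ head₁₀ f)
    (fun x b => by simp [head₁₀, append]) t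

theorem rTensor_lTensor (f : B →ₗ[R] B) (g : X →ₗ[R] Y) (t : B ⊗[R] X) :
    f.rTensor Y (◁g t) = ◁g (f.rTensor X t) :=
  ext_append₁ (f := f.rTensor Y ∘ₗ ◁g) (g := ◁g ∘ₗ f.rTensor X) (fun _ _ => rfl) t

end Naturality

theorem head₂₂_comp (f g : B ⊗[R] B →ₗ[R] B ⊗[R] B) (t : B ⊗[R] (B ⊗[R] X)) :
    head₂₂ (f ∘ₗ g) t = head₂₂ f (head₂₂ g t) :=
  ext_append₂ (g := head₂₂ f ∘ₗ head₂₂ g) (fun x u => by simp only [comp_apply, head₂₂_append]) t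

theorem head₂₂_id (t : B ⊗[R] (B ⊗[R] X)) : head₂₂ LinearMap.id t = t :=
  ext_append₂ (g := LinearMap.id) (fun x u => by simp only [head₂₂_append, id_apply]) t

theorem head₂₂_surjective {f : B ⊗[R] B →ₗ[R] B ⊗[R] B} (hf : Function.Surjective f) :
    Function.Surjective (head₂₂ (X := X) f) :=
  (TensorProduct.assoc R B B X).surjective.comp
    ((rTensor_surjective X hf).comp (TensorProduct.assoc R B B X).symm.surjective)

theorem head₂₀_comp (f : B ⊗[R] B →ₗ[R] R) (g : B ⊗[R] B →ₗ[R] B ⊗[R] B)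
    (t : B ⊗[R] (B ⊗[R] X)) : head₂₀ (f ∘ₗ g) t = head₂₀ f (head₂₂ g t) :=
  ext_append₂ (g := head₂₀ f ∘ₗ head₂₂ g)
    (fun x u => by simp only [comp_apply, head₂₂_append, head₂₀_append]) t

end Strands

namespace BQG

variable {A X Y : Type*} [Ring A] [Algebra ℂ A] [AddCommMonoid X] [Module ℂ X] [AddCommMonoid Y]
  [Module ℂ Y]

local notation "m₁" => head₂₁ (mA (A := A))
local notation "η₁" => TensorProduct.mk ℂ A _ 1

section Multiplication

theorem unit_naturality (g : X →ₗ[ℂ] Y) (x : X) : η₁ (g x) = ◁g (η₁ x) := rfl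

theorem mul_unit_left (t : A ⊗[ℂ] X) : m₁ (η₁ t) = t :=
  ext_append₁ (f := m₁ ∘ₗ η₁) (g := LinearMap.id)
    (fun x b => congrArg (append x) (one_mul b)) t

theorem mul_unit_right (t : A ⊗[ℂ] X) : m₁ (◁η₁ t) = t :=
  ext_append₁ (f := m₁ ∘ₗ ◁η₁) (g := LinearMap.id)
    (fun x b => congrArg (append x) (mul_one b)) t

theorem mul_mul (t : A ⊗[ℂ] (A ⊗[ℂ] (A ⊗[ℂ] X))) : m₁ (m₁ t) = m₁ (◁m₁ t) := by
  refine LinearMap.congr_fun (f := m₁ ∘ₗ m₁) (g := m₁ ∘ₗ ◁m₁) ?_ t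
  ext a b c x
  exact congrArg (append x) (mul_assoc a b c)

theorem head_append_op12 (α : T2 A →ₗ[ℂ] T2 A) (x : X) (u : T3 A) :
    head₂₂ α (◁◁(append x) u) = ◁◁(append x) (op12 α u) :=
  head₂₂_lTensor α (append x) u

theorem lTensor_head_append_op23 (α : T2 A →ₗ[ℂ] T2 A) (x : X) (u : T3 A) :
    ◁(head₂₂ α) (◁◁(append x) u) = ◁◁(append x) (op23 α u) :=
  whisker₂₂ (head₂₂_append α x) u

theorem mul_append (x : X) (u : T3 A) : m₁ (◁◁(append x) u) = ◁(append x) (m12 u) :=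
  head₂₁_lTensor _ (append x) u

theorem lTensor_mul_append (x : X) (u : T3 A) : ◁m₁ (◁◁(append x) u) = ◁(append x) (m23 u) :=
  whisker₂₂ (head₂₁_append _ x) u

theorem head_mul_right {α : T2 A →ₗ[ℂ] T2 A} (h : α ∘ₗ m23 = m12 ∘ₗ op23 α ∘ₗ op12 α)
    (t : A ⊗[ℂ] (A ⊗[ℂ] (A ⊗[ℂ] X))) :
    head₂₂ α (◁m₁ t) = m₁ (◁(head₂₂ α) (head₂₂ α t)) := by
  refine ext_append₃ (f := head₂₂ α ∘ₗ ◁m₁) (g := m₁ ∘ₗ ◁(head₂₂ α) ∘ₗ head₂₂ α)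
    (fun x u => ?_) t
  simp only [comp_apply, lTensor_mul_append, head₂₂_append, head_append_op12,
    lTensor_head_append_op23, mul_append]
  exact congrArg _ (LinearMap.congr_fun h u)

end Multiplication

variable (G : BQG A)

local notation "φ₁" => head₁₂ (BQG.φ G)
local notation "ε₁" => head₁₀ (BQG.ε G)
local notation "κ₁" => rTensor _ (BQG.κ G)
local notation "σ₁" => head₂₂ (BQG.σ G)
local notation "σ⁻₁" => head₂₂ (BQG.σ' G)
local notation "τ₁" => head₂₂ (BQG.τ G)

section Axioms

theorem braid_braidInv (t : A ⊗[ℂ] (A ⊗[ℂ] X)) : σ₁ (σ⁻₁ t) = t := by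
  rw [← head₂₂_comp, G.σ_comp, head₂₂_id]

theorem braidInv_braid (t : A ⊗[ℂ] (A ⊗[ℂ] X)) : σ⁻₁ (σ₁ t) = t := by
  rw [← head₂₂_comp, G.comp_σ, head₂₂_id]

theorem comul_append (x : X) (u : T2 A) : φ₁ (◁(append x) u) = ◁◁(append x) (G.φ1 u) :=
  head₁₂_lTensor G.φ (append x) u

theorem lTensor_comul_append (x : X) (u : T2 A) :
    ◁φ₁ (◁(append x) u) = ◁◁(append x) (G.φ2 u) :=
  whisker₂₂ (head₁₂_append G.φ x) u

theorem coassoc_head (t : A ⊗[ℂ] X) : φ₁ (φ₁ t) = ◁φ₁ (φ₁ t) := by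
  refine ext_append₁ (f := φ₁ ∘ₗ φ₁) (g := ◁φ₁ ∘ₗ φ₁) (fun x b => ?_) t
  simp only [comp_apply, head₁₂_append, head₁₂_lTensor, whisker₂₂ (head₁₂_append G.φ x)]
  exact congrArg _ (LinearMap.congr_fun G.coassoc b)

theorem counit_left_head (t : A ⊗[ℂ] X) : ε₁ (φ₁ t) = t := by
  refine ext_append₁ (f := ε₁ ∘ₗ φ₁) (g := LinearMap.id) (fun x b => ?_) t
  simp only [comp_apply, head₁₂_append, head₁₀_append]
  exact congrArg _ (LinearMap.congr_fun G.counit_left b)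

theorem counit_right_head (t : A ⊗[ℂ] X) : ◁ε₁ (φ₁ t) = t := by
  refine ext_append₁ (f := ◁ε₁ ∘ₗ φ₁) (g := LinearMap.id) (fun x b => ?_) t
  simp only [comp_apply, head₁₂_append, lTensor_head₁₀_append]
  exact congrArg _ (LinearMap.congr_fun G.counit_right b)

theorem braid_mul_left_head (t : A ⊗[ℂ] (A ⊗[ℂ] (A ⊗[ℂ] X))) :
    σ₁ (m₁ t) = ◁m₁ (σ₁ (◁σ₁ t)) := by
  refine ext_append₃ (f := σ₁ ∘ₗ m₁) (g := ◁m₁ ∘ₗ σ₁ ∘ₗ ◁σ₁) (fun x u => ?_) t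
  simp only [comp_apply, mul_append, head₂₂_append, lTensor_head_append_op23, head_append_op12,
    lTensor_mul_append]
  exact congrArg _ (LinearMap.congr_fun G.braid_mul_left u)

theorem comul_mul_head (t : A ⊗[ℂ] (A ⊗[ℂ] X)) :
    φ₁ (m₁ t) = m₁ (◁◁m₁ (◁σ₁ (φ₁ (◁φ₁ t)))) := by
  refine ext_append₂ (f := φ₁ ∘ₗ m₁) (g := m₁ ∘ₗ ◁◁m₁ ∘ₗ ◁σ₁ ∘ₗ φ₁ ∘ₗ ◁φ₁) (fun x u => ?_) t
  simp only [comp_apply, head₂₁_append, head₁₂_append, whisker₂₂ (head₁₂_append G.φ x),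
    head₁₂_lTensor G.φ (lTensor A (append x)), whisker₂₂ (head₂₂_lTensor G.σ (append x)),
    whisker₂₂ (whisker₂₂ (head₂₁_append _ x)), head₂₁_lTensor _ (append x)]
  exact congrArg _ (LinearMap.congr_fun G.comul_mul u)

theorem mixed_coassoc_head (t : A ⊗[ℂ] (A ⊗[ℂ] X)) :
    σ₁ (◁φ₁ (σ⁻₁ (◁φ₁ t))) = ◁◁σ₁ (◁φ₁ (◁σ⁻₁ (φ₁ t))) := by
  refine ext_append₂ (f := σ₁ ∘ₗ ◁φ₁ ∘ₗ σ⁻₁ ∘ₗ ◁φ₁)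
    (g := ◁◁σ₁ ∘ₗ ◁φ₁ ∘ₗ ◁σ⁻₁ ∘ₗ φ₁) (fun x u => ?_) t
  simp only [comp_apply, whisker₂₂ (head₁₂_append G.φ x), head₁₂_lTensor, head₂₂_lTensor,
    whisker₂₂ (head₁₂_lTensor G.φ (append x)), whisker₂₂ (head₂₂_append G.σ' x),
    whisker₂₂ (whisker₂₂ (head₂₂_append G.σ x))]
  exact congrArg _ (LinearMap.congr_fun G.mixed_coassoc u)

theorem append_algebraMap (c : ℂ) (x : X) : append x (algebraMap ℂ A c) = η₁ (c • x) := by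
  simp [append, Algebra.algebraMap_eq_smul_one]

theorem antipode_left_head (t : A ⊗[ℂ] X) : m₁ (κ₁ (φ₁ t)) = η₁ (ε₁ t) := by
  refine ext_append₁ (f := m₁ ∘ₗ κ₁ ∘ₗ φ₁) (g := η₁ ∘ₗ ε₁) (fun x b => ?_) t
  simp only [comp_apply, head₁₂_append, rTensor_lTensor, head₂₁_append]
  exact (congrArg _ (LinearMap.congr_fun G.antipode_left b)).trans (append_algebraMap _ x)

theorem antipode_right_head (t : A ⊗[ℂ] X) : m₁ (◁κ₁ (φ₁ t)) = η₁ (ε₁ t) := by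
  refine ext_append₁ (f := m₁ ∘ₗ ◁κ₁ ∘ₗ φ₁) (g := η₁ ∘ₗ ε₁) (fun x b => ?_) t
  have antipode_append (b : A) : κ₁ (append x b) = append x (G.κ b) := rfl
  simp only [comp_apply, head₁₂_append, whisker₂₂ antipode_append, head₂₁_append]
  exact (congrArg _ (LinearMap.congr_fun G.antipode_right b)).trans (append_algebraMap _ x)

end Axioms

section Cancellation

theorem eq_of_id_conv_eq {f g : A ⊗[ℂ] X →ₗ[ℂ] A ⊗[ℂ] Y}
    (h : ∀ t, m₁ (◁f (φ₁ t)) = m₁ (◁g (φ₁ t))) (t : A ⊗[ℂ] X) : f t = g t := by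
  have recover (f : A ⊗[ℂ] X →ₗ[ℂ] A ⊗[ℂ] Y) (t : A ⊗[ℂ] X) :
      m₁ (κ₁ (◁(m₁ ∘ₗ ◁f ∘ₗ φ₁) (φ₁ t))) = f t := by
    rw [← whisker₂₁ (a := m₁) (b := ◁f ∘ₗ φ₁) fun _ => rfl,
      ← whisker₂₁ (a := ◁f) (b := φ₁) fun _ => rfl, ← coassoc_head, rTensor_lTensor, ← mul_mul,
      rTensor_lTensor, head₂₁_lTensor, antipode_left_head, counit_left_head, ← unit_naturality,
      mul_unit_left]
  rw [← recover f, ← recover g,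
    LinearMap.ext (f := m₁ ∘ₗ ◁f ∘ₗ φ₁) (g := m₁ ∘ₗ ◁g ∘ₗ φ₁) h]

theorem mul_comul_injective : Function.Injective (m₁ ∘ₗ ◁(head₁₂ (X := X) G.φ)) := by
  refine Function.LeftInverse.injective (g := m₁ ∘ₗ ◁κ₁ ∘ₗ ◁φ₁) fun t => ?_
  simp only [comp_apply]
  rw [← head₂₁_lTensor, ← head₂₁_lTensor, mul_mul, ← whisker₂₂ G.coassoc_head,
    whisker₃₂ G.antipode_right_head, whisker₂₀ G.counit_left_head, mul_unit_right]

end Cancellation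

section Functionals

/-- The operator `u ⊗ v ↦ u₁ ⊗ a(u₂, v₁) v₂` on the first two strands attached to a functional
`a`. Such operators commute with the coproduct on either side and, on adjacent pairs of strands,
with one another; `σ⁻¹τ`, `τ⁻¹σ` and `τσ⁻¹` are of this form, for the functionals `counitMul`,
`counitBraid` and `counitBraidInv`. -/
def contract (a : T2 A →ₗ[ℂ] ℂ) : A ⊗[ℂ] (A ⊗[ℂ] X) →ₗ[ℂ] A ⊗[ℂ] (A ⊗[ℂ] X) :=
  ◁(head₂₀ a) ∘ₗ φ₁ ∘ₗ ◁φ₁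

/-- `ε m`, the counit of a product. -/
def counitMul : T2 A →ₗ[ℂ] ℂ := G.ε ∘ₗ mA

/-- `(ε ⊗ ε)σ`. -/
def counitBraid : T2 A →ₗ[ℂ] ℂ := G.εε ∘ₗ G.σ

/-- `(ε ⊗ ε)σ⁻¹`. -/
def counitBraidInv : T2 A →ₗ[ℂ] ℂ := G.εε ∘ₗ G.σ'

theorem contract_apply (a : T2 A →ₗ[ℂ] ℂ) (t : A ⊗[ℂ] (A ⊗[ℂ] X)) :
    G.contract a t = ◁(head₂₀ a) (φ₁ (◁φ₁ t)) := rfl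

theorem head_counitMul (t : A ⊗[ℂ] (A ⊗[ℂ] X)) : head₂₀ G.counitMul t = ε₁ (m₁ t) := by
  refine ext_append₂ (f := head₂₀ G.counitMul) (g := ε₁ ∘ₗ m₁) (fun x u => ?_) t
  simp only [comp_apply, head₂₀_append, head₂₁_append]
  rfl

theorem head_εε (t : A ⊗[ℂ] (A ⊗[ℂ] X)) : head₂₀ G.εε t = ε₁ (ε₁ t) := by
  refine LinearMap.congr_fun (f := head₂₀ G.εε) (g := ε₁ ∘ₗ ε₁) ?_ t
  ext a b x
  simp [head₂₀, head₁₀, εε, mul_smul]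

theorem head_counitBraid (t : A ⊗[ℂ] (A ⊗[ℂ] X)) :
    head₂₀ G.counitBraid t = ε₁ (ε₁ (σ₁ t)) := by
  rw [counitBraid, head₂₀_comp, head_εε]

theorem head_counitBraidInv (t : A ⊗[ℂ] (A ⊗[ℂ] X)) :
    head₂₀ G.counitBraidInv t = ε₁ (ε₁ (σ⁻₁ t)) := by
  rw [counitBraidInv, head₂₀_comp, head_εε]

variable (a b : T2 A →ₗ[ℂ] ℂ)

theorem contract_lTensor (g : X →ₗ[ℂ] Y) (t : A ⊗[ℂ] (A ⊗[ℂ] X)) :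
    G.contract a (◁◁g t) = ◁◁g (G.contract a t) := by
  rw [contract_apply, whisker₂₂ (head₁₂_lTensor G.φ g), head₁₂_lTensor,
    whisker₂₂ (head₂₀_lTensor a (lTensor A g)), contract_apply]

theorem comul_contract (t : A ⊗[ℂ] (A ⊗[ℂ] X)) :
    φ₁ (G.contract a t) = ◁(G.contract a) (φ₁ t) := by
  rw [contract_apply, head₁₂_lTensor, coassoc_head, head₁₂_lTensor]
  exact whisker₃₁ (fun _ => rfl) _

theorem lTensor_comul_contract (t : A ⊗[ℂ] (A ⊗[ℂ] X)) :
    ◁φ₁ (G.contract a t) = G.contract a (◁φ₁ t) := by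
  rw [contract_apply, contract_apply, whisker₂₂ G.coassoc_head,
    head₁₂_lTensor G.φ (lTensor A φ₁), whisker₂₂ (head₂₀_lTensor a φ₁)]

theorem contract_lTensor_contract (t : A ⊗[ℂ] (A ⊗[ℂ] (A ⊗[ℂ] X))) :
    G.contract a (◁(G.contract b) t) = ◁(G.contract b) (G.contract a t) := by
  rw [contract_apply, whisker₂₂ (G.comul_contract b), head₁₂_lTensor,
    whisker₂₂ (head₂₀_lTensor a (G.contract b)), ← contract_apply]

end Functionals

section Units

theorem braid_unit_left (v : A ⊗[ℂ] X) : σ₁ (η₁ v) = ◁η₁ v := by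
  have mul_braid_unit (t : A ⊗[ℂ] (A ⊗[ℂ] X)) : ◁m₁ (σ₁ (η₁ t)) = t := by
    rw [← G.braid_braidInv t, unit_naturality, ← braid_mul_left_head, mul_unit_left]
  have h := mul_braid_unit (◁η₁ v)
  rwa [unit_naturality, head₂₂_lTensor, whisker₂₀ mul_unit_right] at h

theorem head_unit_right {α : T2 A →ₗ[ℂ] T2 A} (hα : Function.Surjective α)
    (h : α ∘ₗ m23 = m12 ∘ₗ op23 α ∘ₗ op12 α) (v : A ⊗[ℂ] X) : head₂₂ α (◁η₁ v) = η₁ v := by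
  have mul_head_unit (t : A ⊗[ℂ] (A ⊗[ℂ] X)) : m₁ (◁(head₂₂ α) (◁◁η₁ t)) = t := by
    obtain ⟨t, rfl⟩ := head₂₂_surjective hα t
    rw [← head₂₂_lTensor, ← head_mul_right h, whisker₂₀ mul_unit_right]
  have h := mul_head_unit (η₁ v)
  rwa [← unit_naturality, ← unit_naturality, mul_unit_left] at h

theorem counitMul_braid_comul (t : A ⊗[ℂ] (A ⊗[ℂ] X)) :
    ◁(head₂₀ G.counitMul) (σ₁ (◁φ₁ t)) = ε₁ t := by
  refine G.eq_of_id_conv_eq (f := ◁(head₂₀ G.counitMul) ∘ₗ σ₁ ∘ₗ ◁φ₁) (g := ε₁) (fun t => ?_) t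
  have h := congrArg ◁ε₁ (G.comul_mul_head t)
  rw [counit_right_head, ← head₂₁_lTensor, whisker₂₁ (d := ◁(head₂₀ G.counitMul))
    (whisker₂₁ fun t => (G.head_counitMul t).symm)] at h
  rw [counit_right_head, h, head₁₂_lTensor]
  exact congrArg m₁ (whisker₃₁ (fun _ => rfl) _).symm

theorem counitMul_lTensor_braid_comul (t : A ⊗[ℂ] (A ⊗[ℂ] X)) :
    head₂₀ G.counitMul (◁σ₁ (φ₁ t)) = ◁ε₁ t := by
  have h (t : A ⊗[ℂ] (A ⊗[ℂ] X)) : head₂₀ G.counitMul (◁σ₁ (φ₁ (◁φ₁ t))) = t := by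
    apply G.mul_comul_injective
    have h := congrArg ε₁ (G.comul_mul_head (◁φ₁ t))
    rw [counit_left_head, ← head_counitMul, head₂₀_lTensor] at h
    rw [comp_apply, comp_apply, h, ← head₂₀_lTensor, ← whisker₂₂ (head₂₂_lTensor G.σ φ₁),
      ← head₁₂_lTensor, ← whisker₂₂ G.coassoc_head]
  have h := congrArg ◁ε₁ (h t)
  rwa [← head₂₀_lTensor, ← whisker₂₂ (head₂₂_lTensor G.σ ε₁), ← head₁₂_lTensor,
    whisker₂₀ G.counit_right_head] at h

theorem counit_unit (v : A ⊗[ℂ] X) : ε₁ (η₁ v) = v := by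
  rw [← counitMul_braid_comul, ← unit_naturality, braid_unit_left, whisker₂₁ (d := ε₁) (fun t => by
    rw [head_counitMul, mul_unit_left]), counit_right_head]

theorem lTensor_counit_unit (v : A ⊗[ℂ] X) : ◁ε₁ (◁η₁ v) = v := by
  calc ◁ε₁ (◁η₁ v) = ◁(G.ε 1 • LinearMap.id) v := whisker₂₁ (fun _ => rfl) v
    _ = ε₁ (η₁ v) := by rw [lTensor_smul, lTensor_id]; rfl
    _ = v := G.counit_unit v

end Units

/-- `(id²⊗ε)(id⊗σ)(φ⊗id)σ⁻¹`, obtained from `τ` by exchanging `σ` and `σ⁻¹`. It is the inverse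
of `τ`. -/
def τ' : T2 A →ₗ[ℂ] T2 A := G.ε3r ∘ₗ op23 G.σ ∘ₗ G.φ1 ∘ₗ G.σ'

local notation "τ⁻₁" => head₂₂ (BQG.τ' G)

section Secondary

theorem head_secondary (a b : T2 A →ₗ[ℂ] T2 A) (t : A ⊗[ℂ] (A ⊗[ℂ] X)) :
    head₂₂ (G.ε3r ∘ₗ op23 a ∘ₗ G.φ1 ∘ₗ b) t = ◁◁ε₁ (◁(head₂₂ a) (φ₁ (head₂₂ b t))) := by
  refine ext_append₂ (g := ◁◁ε₁ ∘ₗ ◁(head₂₂ a) ∘ₗ φ₁ ∘ₗ head₂₂ b) (fun x u => ?_) t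
  simp only [comp_apply, head₂₂_append, head₁₂_lTensor, whisker₂₂ (head₂₂_append a x)]
  exact (whisker₂₂ (e := (TensorProduct.rid ℂ A).toLinearMap ∘ₗ G.ε.lTensor A)
    (lTensor_head₁₀_append G.ε x) _).symm

theorem secondary_head (t : A ⊗[ℂ] (A ⊗[ℂ] X)) : τ₁ t = ◁◁ε₁ (◁σ⁻₁ (φ₁ (σ₁ t))) :=
  G.head_secondary G.σ' G.σ t

theorem secondaryInv_head (t : A ⊗[ℂ] (A ⊗[ℂ] X)) : τ⁻₁ t = ◁◁ε₁ (◁σ₁ (φ₁ (σ⁻₁ t))) :=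
  G.head_secondary G.σ G.σ' t

theorem braid_lTensor_comul_braidInv (t : A ⊗[ℂ] (A ⊗[ℂ] X)) :
    σ₁ (◁φ₁ (σ⁻₁ t)) = ◁τ⁻₁ (φ₁ t) := by
  have h := congrArg ◁◁◁ε₁ (G.mixed_coassoc_head t)
  rw [← head₂₂_lTensor, ← whisker₂₂ (head₁₂_lTensor G.φ ε₁), ← head₂₂_lTensor,
    whisker₂₀ G.counit_right_head] at h
  rw [h, whisker₁₁ (a' := ◁◁ε₁ ∘ₗ ◁σ₁ ∘ₗ φ₁ ∘ₗ σ⁻₁) G.secondaryInv_head]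
  simp only [lTensor_comp, comp_apply]

theorem counit_braid_comul_braidInv_comul (t : A ⊗[ℂ] (A ⊗[ℂ] X)) :
    ε₁ (σ₁ (◁φ₁ (σ⁻₁ (◁φ₁ t)))) = ◁σ₁ (φ₁ (σ⁻₁ t)) := by
  rw [mixed_coassoc_head, head₁₀_lTensor, head₁₀_lTensor, head₁₀_lTensor, counit_left_head]

theorem secondaryInv_eq_counit_braid (t : A ⊗[ℂ] (A ⊗[ℂ] X)) :
    τ⁻₁ t = ε₁ (σ₁ (◁φ₁ (σ⁻₁ t))) := by
  rw [secondaryInv_head, ← counit_braid_comul_braidInv_comul, ← head₁₀_lTensor,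
    ← head₂₂_lTensor, ← whisker₂₂ (head₁₂_lTensor G.φ ε₁), ← head₂₂_lTensor,
    whisker₂₀ G.counit_right_head]

theorem lTensor_braid_comul_braidInv (t : A ⊗[ℂ] (A ⊗[ℂ] X)) :
    ◁σ₁ (φ₁ (σ⁻₁ t)) = τ⁻₁ (◁φ₁ t) := by
  rw [secondaryInv_eq_counit_braid, counit_braid_comul_braidInv_comul]

theorem secondaryInv_braid_eq_counit (t : A ⊗[ℂ] (A ⊗[ℂ] X)) :
    τ⁻₁ (σ₁ t) = ε₁ (σ₁ (◁φ₁ t)) := by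
  rw [secondaryInv_eq_counit_braid, braidInv_braid]

theorem secondaryInv_braid_eq_lTensor_counit (t : A ⊗[ℂ] (A ⊗[ℂ] X)) :
    τ⁻₁ (σ₁ t) = ◁◁ε₁ (◁σ₁ (φ₁ t)) := by
  rw [secondaryInv_head, braidInv_braid]

theorem counitBraid_lTensor_comul (t : A ⊗[ℂ] (A ⊗[ℂ] X)) :
    head₂₀ G.counitBraid (◁φ₁ t) = ◁ε₁ (σ₁ t) := by
  rw [head_counitBraid, ← secondaryInv_braid_eq_counit, secondaryInv_braid_eq_lTensor_counit,
    head₁₀_lTensor, head₁₀_lTensor, counit_left_head]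

theorem secondaryInv_braid (t : A ⊗[ℂ] (A ⊗[ℂ] X)) :
    τ⁻₁ (σ₁ t) = G.contract G.counitBraid t := by
  rw [secondaryInv_braid_eq_lTensor_counit, contract_apply, head₁₂_lTensor,
    whisker₂₂ fun t => (G.counitBraid_lTensor_comul t).symm]

theorem counitMul_contract_counitBraid (t : A ⊗[ℂ] (A ⊗[ℂ] X)) :
    head₂₀ G.counitMul (G.contract G.counitBraid t) = ε₁ (ε₁ t) := by
  rw [← secondaryInv_braid, secondaryInv_braid_eq_counit, ← head₁₀_lTensor, counitMul_braid_comul]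

theorem contract_counitMul_contract_counitBraid (t : A ⊗[ℂ] (A ⊗[ℂ] X)) :
    G.contract G.counitMul (G.contract G.counitBraid t) = t := by
  rw [contract_apply, lTensor_comul_contract, comul_contract,
    whisker₂₂ G.counitMul_contract_counitBraid, counit_right_head, whisker₂₀ G.counit_left_head]

theorem contract_counitMul_secondaryInv (t : A ⊗[ℂ] (A ⊗[ℂ] X)) :
    G.contract G.counitMul (τ⁻₁ t) = σ⁻₁ t := by
  conv_lhs => rw [← G.braid_braidInv t, secondaryInv_braid,
    contract_counitMul_contract_counitBraid]

theorem counitMul_secondaryInv (t : A ⊗[ℂ] (A ⊗[ℂ] X)) :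
    head₂₀ G.counitMul (τ⁻₁ t) = head₂₀ G.counitBraidInv t := by
  rw [secondaryInv_eq_counit_braid, ← head₁₀_lTensor, counitMul_braid_comul, head_counitBraidInv]

theorem lTensor_counitBraidInv_comul (t : A ⊗[ℂ] (A ⊗[ℂ] X)) :
    ◁(head₂₀ G.counitBraidInv) (φ₁ t) = ε₁ (σ⁻₁ t) := by
  rw [← counitMul_braid_comul, braid_lTensor_comul_braidInv, whisker₂₁ G.counitMul_secondaryInv]

theorem counitBraidInv_lTensor_comul (t : A ⊗[ℂ] (A ⊗[ℂ] X)) :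
    head₂₀ G.counitBraidInv (◁φ₁ t) = ◁ε₁ (σ⁻₁ t) := by
  rw [← counitMul_lTensor_braid_comul, lTensor_braid_comul_braidInv, counitMul_secondaryInv]

theorem secondary_eq_contract_braid (t : A ⊗[ℂ] (A ⊗[ℂ] X)) :
    τ₁ t = G.contract G.counitBraidInv (σ₁ t) := by
  rw [secondary_head, whisker₂₂ fun t => (G.counitBraidInv_lTensor_comul t).symm,
    contract_apply, head₁₂_lTensor]

theorem secondary_eq_counit_braidInv (t : A ⊗[ℂ] (A ⊗[ℂ] X)) :
    τ₁ t = ε₁ (σ⁻₁ (◁φ₁ (σ₁ t))) := by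
  rw [← lTensor_counitBraidInv_comul, secondary_eq_contract_braid, contract_apply]

theorem lTensor_counit_secondary (t : A ⊗[ℂ] (A ⊗[ℂ] X)) : ◁ε₁ (τ₁ t) = ε₁ t := by
  rw [secondary_eq_counit_braidInv, ← head₁₀_lTensor, ← head₂₂_lTensor,
    whisker₂₀ G.counit_right_head, braidInv_braid]

theorem counit_secondary (t : A ⊗[ℂ] (A ⊗[ℂ] X)) : ε₁ (τ₁ t) = ◁ε₁ t := by
  rw [secondary_head, head₁₀_lTensor, head₁₀_lTensor, counit_left_head, braidInv_braid]

end Secondary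

section Pentagons

theorem lTensor_braidInv_comul_braid (t : A ⊗[ℂ] (A ⊗[ℂ] X)) :
    ◁σ⁻₁ (φ₁ (σ₁ t)) = ◁(G.contract G.counitMul) (σ₁ (◁φ₁ t)) := by
  conv_rhs => rw [← G.braidInv_braid t, braid_lTensor_comul_braidInv,
    whisker₂₁ G.contract_counitMul_secondaryInv]

theorem braidInv_lTensor_comul_braid (t : A ⊗[ℂ] (A ⊗[ℂ] X)) :
    σ⁻₁ (◁φ₁ (σ₁ t)) = G.contract G.counitMul (◁σ₁ (φ₁ t)) := by
  conv_rhs => rw [← G.braidInv_braid t, lTensor_braid_comul_braidInv,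
    contract_counitMul_secondaryInv]

theorem secondary_eq_braid_contract (t : A ⊗[ℂ] (A ⊗[ℂ] X)) :
    τ₁ t = σ₁ (G.contract G.counitMul t) := by
  have comul_braid (t : A ⊗[ℂ] (A ⊗[ℂ] X)) :
      φ₁ (σ₁ t) = ◁σ₁ (◁(G.contract G.counitMul) (σ₁ (◁φ₁ t))) := by
    rw [← lTensor_braidInv_comul_braid, whisker₂₀ G.braid_braidInv]
  rw [secondary_eq_counit_braidInv, braidInv_lTensor_comul_braid, contract_apply, head₁₀_lTensor,
    counit_left_head, whisker₂₂ (d := ◁(σ₁ ∘ₗ G.contract G.counitMul)) (e := σ₁ ∘ₗ ◁φ₁)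
      fun t => (comul_braid t).trans (whisker₂₁ (fun _ => rfl) _),
    head₂₀_lTensor, ← whisker₂₁ (a := σ₁) (b := ◁φ₁) fun _ => rfl, ← head₁₂_lTensor,
    counitMul_lTensor_braid_comul, whisker₂₀ G.counit_left_head, comp_apply]

theorem secondary_secondaryInv (t : A ⊗[ℂ] (A ⊗[ℂ] X)) : τ₁ (τ⁻₁ t) = t := by
  rw [secondary_eq_braid_contract, contract_counitMul_secondaryInv, braid_braidInv]

theorem comul_braid (t : A ⊗[ℂ] (A ⊗[ℂ] X)) : φ₁ (σ₁ t) = ◁τ₁ (σ₁ (◁φ₁ t)) := by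
  conv_rhs => rw [← G.braidInv_braid t, braid_lTensor_comul_braidInv,
    whisker₂₀ G.secondary_secondaryInv]

theorem comul_braid_eq_lTensor_braid (t : A ⊗[ℂ] (A ⊗[ℂ] X)) : φ₁ (σ₁ t) = ◁σ₁ (τ₁ (◁φ₁ t)) := by
  have h : ◁◁φ₁ (◁σ⁻₁ (φ₁ (σ₁ t))) = ◁σ⁻₁ (φ₁ (σ₁ (◁φ₁ t))) := by
    rw [lTensor_braidInv_comul_braid, lTensor_braidInv_comul_braid, whisker₂₂ G.coassoc_head,
      head₂₂_lTensor, whisker₂₂ (G.lTensor_comul_contract _)]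
  rw [secondary_head, ← h, whisker₂₀ (whisker₂₀ G.counit_left_head), whisker₂₀ G.braid_braidInv]

theorem lTensor_comul_braid_eq_braid (t : A ⊗[ℂ] (A ⊗[ℂ] X)) : ◁φ₁ (σ₁ t) = σ₁ (◁τ₁ (φ₁ t)) := by
  have h : φ₁ (σ⁻₁ (◁φ₁ (σ₁ t))) = ◁σ⁻₁ (◁◁φ₁ (◁σ₁ (φ₁ t))) := by
    rw [braidInv_lTensor_comul_braid, comul_contract, head₁₂_lTensor, coassoc_head,
      whisker₃₃ G.braidInv_lTensor_comul_braid]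
  rw [whisker₁₁ (a' := ε₁ ∘ₗ σ⁻₁ ∘ₗ ◁φ₁ ∘ₗ σ₁) G.secondary_eq_counit_braidInv, lTensor_comp,
    lTensor_comp, lTensor_comp, comp_apply, comp_apply, comp_apply, ← h, counit_right_head,
    braid_braidInv]

end Pentagons

section Inverse

theorem braid_comul_eq_contract (t : A ⊗[ℂ] (A ⊗[ℂ] X)) :
    ◁σ₁ (φ₁ t) = G.contract G.counitBraid (◁τ₁ (φ₁ t)) := by
  rw [← secondaryInv_braid, ← lTensor_comul_braid_eq_braid, ← lTensor_braid_comul_braidInv,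
    braidInv_braid]

theorem contract_counitBraid_surjective :
    Function.Surjective (G.contract (X := X) G.counitBraid) := by
  have mul_braid_antipode (t : A ⊗[ℂ] (A ⊗[ℂ] X)) :
      ◁m₁ (σ₁ (◁σ₁ (◁κ₁ (φ₁ t)))) = ◁η₁ (ε₁ t) := by
    rw [← braid_mul_left_head, antipode_right_head, braid_unit_left]
  have contract_eq (t : A ⊗[ℂ] (A ⊗[ℂ] X)) :
      G.contract G.counitBraid (◁◁m₁ (◁τ₁ (φ₁ (◁σ₁ (◁κ₁ (φ₁ t)))))) = ◁◁η₁ t := by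
    have h := whisker₁₁ (a := ◁m₁ ∘ₗ σ₁ ∘ₗ ◁σ₁ ∘ₗ ◁κ₁ ∘ₗ φ₁) (a' := ◁η₁ ∘ₗ ε₁)
      mul_braid_antipode (φ₁ t)
    simp only [lTensor_comp, comp_apply, G.counit_right_head] at h
    rw [contract_lTensor, ← braid_comul_eq_contract, head₁₂_lTensor, head₁₂_lTensor,
      coassoc_head, h]
  intro t
  have h := congrArg ◁◁ε₁ (contract_eq t)
  rw [whisker₂₀ G.lTensor_counit_unit, ← contract_lTensor] at h
  exact ⟨_, h⟩

theorem contract_counitBraid_contract_counitMul (t : A ⊗[ℂ] (A ⊗[ℂ] X)) :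
    G.contract G.counitBraid (G.contract G.counitMul t) = t := by
  obtain ⟨t, rfl⟩ := G.contract_counitBraid_surjective t
  rw [contract_counitMul_contract_counitBraid]

theorem secondaryInv_secondary (t : A ⊗[ℂ] (A ⊗[ℂ] X)) : τ⁻₁ (τ₁ t) = t := by
  rw [secondary_eq_braid_contract, secondaryInv_braid, contract_counitBraid_contract_counitMul]

theorem comul_secondary (t : A ⊗[ℂ] (A ⊗[ℂ] X)) : φ₁ (τ₁ t) = ◁τ₁ (τ₁ (◁φ₁ t)) := by
  rw [secondary_eq_contract_braid, comul_contract, comul_braid_eq_lTensor_braid,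
    whisker₂₁ fun t => (G.secondary_eq_contract_braid t).symm]

theorem lTensor_comul_secondary (t : A ⊗[ℂ] (A ⊗[ℂ] X)) :
    ◁φ₁ (τ₁ t) = τ₁ (◁τ₁ (φ₁ t)) := by
  rw [secondary_eq_contract_braid, lTensor_comul_contract, lTensor_comul_braid_eq_braid,
    ← secondary_eq_contract_braid]

end Inverse

section Commutation

variable (a : T2 A →ₗ[ℂ] ℂ)

theorem braid_secondaryInv_contract (t : A ⊗[ℂ] (A ⊗[ℂ] X)) :
    σ₁ (τ⁻₁ (G.contract G.counitBraidInv t)) = t := by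
  rw [← G.braid_braidInv t, ← secondary_eq_contract_braid, secondaryInv_secondary]

theorem contract_braid_secondaryInv (t : A ⊗[ℂ] (A ⊗[ℂ] X)) :
    G.contract G.counitBraidInv (σ₁ (τ⁻₁ t)) = t := by
  rw [← secondary_eq_contract_braid, secondary_secondaryInv]

theorem braid_secondaryInv_lTensor_contract (t : A ⊗[ℂ] (A ⊗[ℂ] (A ⊗[ℂ] X))) :
    σ₁ (τ⁻₁ (◁(G.contract a) t)) = ◁(G.contract a) (σ₁ (τ⁻₁ t)) := by
  conv_lhs => rw [← G.contract_braid_secondaryInv t, ← contract_lTensor_contract,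
    braid_secondaryInv_contract]

theorem contract_lTensor_braid_secondaryInv (t : A ⊗[ℂ] (A ⊗[ℂ] (A ⊗[ℂ] X))) :
    G.contract a (◁σ₁ (◁τ⁻₁ t)) = ◁σ₁ (◁τ⁻₁ (G.contract a t)) := by
  have h : ◁(G.contract G.counitBraidInv) (◁σ₁ (◁τ⁻₁ t)) = t := by
    rw [whisker₃₁ (d := LinearMap.id) G.contract_braid_secondaryInv, lTensor_id_apply]
  conv_rhs => rw [← h, contract_lTensor_contract,
    whisker₃₁ (d := LinearMap.id) G.braid_secondaryInv_contract, lTensor_id_apply]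

end Commutation

section Multiplicativity

theorem contract_counitBraid_eq_counit (t : A ⊗[ℂ] (A ⊗[ℂ] X)) :
    G.contract G.counitBraid t = ε₁ (σ₁ (◁φ₁ t)) := by
  rw [← secondaryInv_braid, secondaryInv_braid_eq_counit]

theorem contract_counitBraid_eq_lTensor_counit (t : A ⊗[ℂ] (A ⊗[ℂ] X)) :
    G.contract G.counitBraid t = ◁◁ε₁ (◁σ₁ (φ₁ t)) := by
  rw [← secondaryInv_braid, secondaryInv_braid_eq_lTensor_counit]

theorem contract_counitBraid_secondaryInv (t : A ⊗[ℂ] (A ⊗[ℂ] X)) :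
    G.contract G.counitBraid (τ⁻₁ t) = τ⁻₁ (σ₁ (τ⁻₁ t)) :=
  (G.secondaryInv_braid _).symm

theorem secondaryInv_mul_left (t : A ⊗[ℂ] (A ⊗[ℂ] (A ⊗[ℂ] X))) :
    τ⁻₁ (m₁ t) = ◁m₁ (τ⁻₁ (◁τ⁻₁ t)) := by
  obtain ⟨t, rfl⟩ : ∃ s, ◁σ₁ (σ₁ s) = t :=
    ⟨σ⁻₁ (◁σ⁻₁ t), by rw [braid_braidInv, whisker₂₀ G.braid_braidInv]⟩
  have h : ◁◁◁ε₁ (◁◁σ₁ (◁φ₁ (τ₁ t))) = ◁(G.contract G.counitBraid) (τ₁ t) :=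
    whisker₃₁ (fun t => (G.contract_counitBraid_eq_lTensor_counit t).symm) _
  have comul_eq : ◁τ₁ (φ₁ t) = τ⁻₁ (◁φ₁ (τ₁ t)) := by
    rw [lTensor_comul_secondary, secondaryInv_secondary]
  rw [← head_mul_right G.braid_mul_right, secondaryInv_braid,
    contract_counitBraid_eq_lTensor_counit, head₁₂_lTensor,
    whisker₂₃ (head_mul_right G.braid_mul_right), ← whisker₂₂ (head₂₁_lTensor mA ε₁),
    braid_comul_eq_contract, ← contract_lTensor, ← contract_lTensor, comul_eq, ← head₂₂_lTensor,
    ← head₂₂_lTensor, h, contract_counitBraid_secondaryInv, braid_secondaryInv_lTensor_contract,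
    secondaryInv_secondary, whisker₂₁ G.secondaryInv_braid]

theorem secondaryInv_mul_right (t : A ⊗[ℂ] (A ⊗[ℂ] (A ⊗[ℂ] X))) :
    τ⁻₁ (◁m₁ t) = m₁ (◁τ⁻₁ (τ⁻₁ t)) := by
  obtain ⟨t, rfl⟩ : ∃ s, σ₁ (◁σ₁ s) = t :=
    ⟨◁σ⁻₁ (σ⁻₁ t), by rw [whisker₂₀ G.braid_braidInv, braid_braidInv]⟩
  have h : ε₁ (σ₁ (◁τ₁ (◁◁φ₁ t))) = ◁τ⁻₁ (G.contract G.counitBraid (◁τ₁ t)) := by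
    rw [contract_counitBraid_eq_counit, whisker₂₃ G.comul_secondary, head₂₂_lTensor,
      head₁₀_lTensor, whisker₂₀ G.secondaryInv_secondary]
  have braid_comul (t : A ⊗[ℂ] (A ⊗[ℂ] X)) :
      σ₁ (◁φ₁ t) = ◁(G.contract G.counitBraid) (τ₁ (◁φ₁ t)) := by
    rw [← whisker₂₁ G.secondaryInv_braid, ← comul_braid_eq_lTensor_braid,
      ← braid_lTensor_comul_braidInv, braidInv_braid]
  rw [← braid_mul_left_head, secondaryInv_braid, contract_counitBraid_eq_counit,
    ← head₂₁_lTensor, braid_mul_left_head, head₁₀_lTensor, whisker₂₃ braid_comul,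
    head₂₂_lTensor, head₁₀_lTensor, h, whisker₂₃ G.contract_counitBraid_secondaryInv,
    ← contract_lTensor_braid_secondaryInv, whisker₂₀ G.secondaryInv_secondary, secondaryInv_braid]

theorem secondary_mul_right (t : A ⊗[ℂ] (A ⊗[ℂ] (A ⊗[ℂ] X))) :
    τ₁ (◁m₁ t) = m₁ (◁τ₁ (τ₁ t)) := by
  have h := G.secondaryInv_mul_left (◁τ₁ (τ₁ t))
  rw [whisker₂₀ G.secondaryInv_secondary, secondaryInv_secondary] at h
  rw [← h, secondary_secondaryInv]

theorem secondary_mul_left (t : A ⊗[ℂ] (A ⊗[ℂ] (A ⊗[ℂ] X))) :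
    τ₁ (m₁ t) = ◁m₁ (τ₁ (◁τ₁ t)) := by
  have h := G.secondaryInv_mul_right (τ₁ (◁τ₁ t))
  rw [secondaryInv_secondary, whisker₂₀ G.secondaryInv_secondary] at h
  rw [← h, secondary_secondaryInv]

theorem counitMul_secondary_secondary (t : A ⊗[ℂ] (A ⊗[ℂ] (A ⊗[ℂ] X))) :
    head₂₀ G.counitMul (◁τ₁ (τ₁ t)) = ◁(head₂₀ G.counitMul) t := by
  rw [head_counitMul, ← secondary_mul_right, counit_secondary]
  exact whisker₂₁ (fun t => (G.head_counitMul t).symm) t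

theorem lTensor_counitMul_secondary_secondary (t : A ⊗[ℂ] (A ⊗[ℂ] (A ⊗[ℂ] X))) :
    ◁(head₂₀ G.counitMul) (τ₁ (◁τ₁ t)) = head₂₀ G.counitMul t := by
  rw [head_counitMul, ← lTensor_counit_secondary, secondary_mul_left]
  exact (whisker₂₁ (fun t => (G.head_counitMul t).symm) _).symm

theorem contract_counitMul_secondary_secondary (t : A ⊗[ℂ] (A ⊗[ℂ] (A ⊗[ℂ] X))) :
    G.contract G.counitMul (◁τ₁ (τ₁ t)) = ◁τ₁ (τ₁ (◁(G.contract G.counitMul) t)) := by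
  have h : ◁(G.contract G.counitMul) t = ◁◁(head₂₀ G.counitMul) (◁φ₁ (◁◁φ₁ t)) :=
    (whisker₃₁ (fun _ => rfl) t).symm
  rw [contract_apply, whisker₂₃ G.comul_secondary, ← head₂₂_lTensor, head₁₂_lTensor,
    head₁₂_lTensor, comul_secondary, whisker₂₂ (head₂₀_lTensor G.counitMul _),
    whisker₃₁ G.counitMul_secondary_secondary, h, head₂₂_lTensor]

theorem lTensor_contract_counitMul_secondary_secondary (t : A ⊗[ℂ] (A ⊗[ℂ] (A ⊗[ℂ] X))) :
    ◁(G.contract G.counitMul) (τ₁ (◁τ₁ t)) = τ₁ (◁τ₁ (G.contract G.counitMul t)) := by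
  have h (t : A ⊗[ℂ] (A ⊗[ℂ] (A ⊗[ℂ] X))) :
      ◁(G.contract G.counitMul) t = ◁◁(head₂₀ G.counitMul) (◁φ₁ (◁◁φ₁ t)) :=
    (whisker₃₁ (fun _ => rfl) t).symm
  rw [h, ← head₂₂_lTensor, whisker₂₃ G.lTensor_comul_secondary, lTensor_comul_secondary,
    head₁₂_lTensor, head₁₂_lTensor, ← head₂₂_lTensor,
    whisker₃₁ G.lTensor_counitMul_secondary_secondary,
    whisker₂₂ (head₂₀_lTensor G.counitMul _), contract_apply]

end Multiplicativity

section Descent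

variable {α β γ : T2 A →ₗ[ℂ] T2 A}

theorem secondary_comp_secondaryInv : G.τ ∘ₗ G.τ' = LinearMap.id :=
  ext_append_one₂ fun u => by
    simp only [comp_apply, id_apply, ← head₂₂_append, secondary_secondaryInv]

theorem secondary_surjective : Function.Surjective G.τ :=
  fun u => ⟨G.τ' u, LinearMap.congr_fun G.secondary_comp_secondaryInv u⟩

theorem secondary_comp_mul_right : G.τ ∘ₗ m23 = m12 ∘ₗ op23 G.τ ∘ₗ op12 G.τ :=
  ext_append_one₂ fun u => by
    simp only [comp_apply, ← head₂₂_append, ← mul_append, ← lTensor_mul_append,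
      ← lTensor_head_append_op23, ← head_append_op12, secondary_mul_right]

theorem comul_head (h : G.φ1 ∘ₗ α = op23 G.τ ∘ₗ op12 α ∘ₗ G.φ2) (t : A ⊗[ℂ] (A ⊗[ℂ] X)) :
    φ₁ (head₂₂ α t) = ◁τ₁ (head₂₂ α (◁φ₁ t)) := by
  refine ext_append₂ (f := φ₁ ∘ₗ head₂₂ α) (g := ◁τ₁ ∘ₗ head₂₂ α ∘ₗ ◁φ₁) (fun x u => ?_) t
  simp only [comp_apply, lTensor_comul_append, head_append_op12, lTensor_head_append_op23,
    head₂₂_append, comul_append]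
  exact congrArg _ (LinearMap.congr_fun h u)

theorem comul_comp_braid : G.φ1 ∘ₗ G.σ = op23 G.τ ∘ₗ op12 G.σ ∘ₗ G.φ2 :=
  ext_append_one₃ fun u => by
    simp only [comp_apply, ← head₂₂_append, ← comul_append, ← lTensor_comul_append,
      ← lTensor_head_append_op23, ← head_append_op12, comul_braid]

theorem comul_comp_secondary : G.φ1 ∘ₗ G.τ = op23 G.τ ∘ₗ op12 G.τ ∘ₗ G.φ2 :=
  ext_append_one₃ fun u => by
    simp only [comp_apply, ← head₂₂_append, ← comul_append, ← lTensor_comul_append,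
      ← lTensor_head_append_op23, ← head_append_op12, comul_secondary]

theorem op_braid_of_head
    (h : ∀ t : A ⊗[ℂ] (A ⊗[ℂ] (A ⊗[ℂ] ℂ)),
      head₂₂ α (◁(head₂₂ β) (head₂₂ γ t)) = ◁(head₂₂ γ) (head₂₂ β (◁(head₂₂ α) t))) :
    op12 α ∘ₗ op23 β ∘ₗ op12 γ = op23 γ ∘ₗ op12 β ∘ₗ op23 α :=
  ext_append_one₃ fun u => by
    simp only [comp_apply, ← head_append_op12, ← lTensor_head_append_op23, h]

end Descent

section Antipode

theorem mul_secondary_antipode_secondary_comul (t : A ⊗[ℂ] (A ⊗[ℂ] X)) :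
    m₁ (◁τ₁ (κ₁ (τ₁ (◁φ₁ t)))) = η₁ (◁ε₁ t) := by
  rw [← rTensor_lTensor, ← comul_secondary, antipode_left_head, counit_secondary]

theorem mul_secondary_lTensor_antipode_comul (t : A ⊗[ℂ] (A ⊗[ℂ] X)) :
    m₁ (◁τ₁ (◁◁κ₁ (τ₁ (◁φ₁ t)))) = η₁ (◁ε₁ t) := by
  rw [← head₂₂_lTensor, ← secondary_mul_right, whisker₃₂ G.antipode_right_head,
    head_unit_right G.secondary_surjective G.secondary_comp_mul_right]

theorem secondary_lTensor_antipode (t : A ⊗[ℂ] (A ⊗[ℂ] X)) : τ₁ (◁κ₁ t) = κ₁ (τ₁ t) := by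
  have cancel_right (t : A ⊗[ℂ] (A ⊗[ℂ] (A ⊗[ℂ] X))) :
      ◁m₁ (◁◁τ₁ (◁◁◁κ₁ (◁τ₁ (◁◁φ₁ t)))) = ◁η₁ (◁◁ε₁ t) := by
    have h := whisker₁₁ (a := m₁ ∘ₗ ◁τ₁ ∘ₗ ◁◁κ₁ ∘ₗ τ₁ ∘ₗ ◁φ₁) (a' := η₁ ∘ₗ ◁ε₁)
      G.mul_secondary_lTensor_antipode_comul t
    simpa only [lTensor_comp, comp_apply] using h
  calc τ₁ (◁κ₁ t)
      = m₁ (◁τ₁ (◁◁κ₁ (m₁ (◁τ₁ (κ₁ (τ₁ (◁φ₁ (◁φ₁ t)))))))) := by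
        rw [mul_secondary_antipode_secondary_comul, whisker₂₀ G.counit_left_head,
          ← unit_naturality, ← unit_naturality, mul_unit_left]
    _ = κ₁ (τ₁ t) := by
        rw [whisker₂₂ G.coassoc_head, head₂₂_lTensor, rTensor_lTensor, ← head₂₁_lTensor,
          ← head₂₁_lTensor, mul_mul, cancel_right, mul_unit_right, ← rTensor_lTensor,
          ← head₂₂_lTensor, whisker₂₀ G.counit_right_head]

end Antipode

section MixedBraid

/-- `(id ⊗ m)(σ ⊗ id)(id ⊗ φ)`, from which the antipode recovers `σ`. -/
def mulBraidComul : A ⊗[ℂ] (A ⊗[ℂ] X) →ₗ[ℂ] A ⊗[ℂ] (A ⊗[ℂ] X) :=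
  ◁m₁ ∘ₗ σ₁ ∘ₗ ◁φ₁

theorem mulBraidComul_apply (t : A ⊗[ℂ] (A ⊗[ℂ] X)) :
    G.mulBraidComul t = ◁m₁ (σ₁ (◁φ₁ t)) := rfl

theorem mulBraidComul_lTensor (g : X →ₗ[ℂ] Y) (t : A ⊗[ℂ] (A ⊗[ℂ] X)) :
    G.mulBraidComul (◁◁g t) = ◁◁g (G.mulBraidComul t) := by
  rw [mulBraidComul_apply, whisker₂₂ (head₁₂_lTensor G.φ g), head₂₂_lTensor,
    whisker₂₂ (head₂₁_lTensor mA g), mulBraidComul_apply]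

theorem mul_antipode_mulBraidComul_comul (t : A ⊗[ℂ] (A ⊗[ℂ] X)) :
    ◁m₁ (◁◁κ₁ (G.mulBraidComul (◁φ₁ t))) = σ₁ t := by
  rw [mulBraidComul_apply, ← whisker₂₂ (head₂₁_lTensor mA κ₁), whisker₂₂ mul_mul,
    whisker₂₂ G.coassoc_head, head₂₂_lTensor,
    whisker₃₂ (whisker₃₂ G.antipode_right_head), whisker₂₀ mul_unit_right, ← head₂₂_lTensor,
    whisker₂₀ G.counit_right_head]

variable {α : T2 A →ₗ[ℂ] T2 A}

theorem comul_head_mul_left (hm : α ∘ₗ m23 = m12 ∘ₗ op23 α ∘ₗ op12 α)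
    (hφ : G.φ1 ∘ₗ α = op23 G.τ ∘ₗ op12 α ∘ₗ G.φ2) (t : A ⊗[ℂ] (A ⊗[ℂ] (A ⊗[ℂ] X))) :
    φ₁ (head₂₂ α (◁m₁ t)) = m₁ (◁◁m₁ (◁◁◁τ₁ (◁σ₁ (◁◁(head₂₂ α)
      (◁τ₁ (◁◁◁φ₁ (head₂₂ α (◁φ₁ t)))))))) := by
  rw [head_mul_right hm, comul_mul_head, whisker₂₃ (G.comul_head hφ), ← head₂₂_lTensor,
    head₁₂_lTensor, head₁₂_lTensor, G.comul_head hφ, whisker₂₂ (head₂₂_lTensor G.σ _),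
    whisker₂₂ (head₁₂_lTensor G.φ φ₁), head₂₂_lTensor]

theorem comul_head_mul_right (hm : α ∘ₗ m23 = m12 ∘ₗ op23 α ∘ₗ op12 α)
    (hφ : G.φ1 ∘ₗ α = op23 G.τ ∘ₗ op12 α ∘ₗ G.φ2) (t : A ⊗[ℂ] (A ⊗[ℂ] (A ⊗[ℂ] X))) :
    φ₁ (head₂₂ α (◁m₁ t)) = m₁ (◁◁m₁ (◁◁◁τ₁ (◁◁τ₁ (◁(head₂₂ α)
      (◁◁σ₁ (◁◁◁φ₁ (head₂₂ α (◁φ₁ t)))))))) := by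
  have comul_mul (t : A ⊗[ℂ] (A ⊗[ℂ] (A ⊗[ℂ] X))) :
      ◁φ₁ (◁m₁ t) = ◁m₁ (◁◁◁m₁ (◁◁σ₁ (◁φ₁ (◁◁φ₁ t)))) := by
    have h := whisker₁₁ (a := φ₁ ∘ₗ m₁) (a' := m₁ ∘ₗ ◁◁m₁ ∘ₗ ◁σ₁ ∘ₗ φ₁ ∘ₗ ◁φ₁)
      G.comul_mul_head t
    simpa only [lTensor_comp, comp_apply] using h
  rw [G.comul_head hφ, comul_mul, head_mul_right hm, head₂₂_lTensor,
    whisker₂₂ (head₂₂_lTensor α _), ← head₂₁_lTensor,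
    whisker₂₃ (whisker₂₃ G.secondary_mul_right), head₂₂_lTensor,
    whisker₂₂ (head₁₂_lTensor G.φ φ₁), head₂₂_lTensor]

theorem eq_of_mul_head_comul (hs : Function.Surjective α)
    (hφ : G.φ1 ∘ₗ α = op23 G.τ ∘ₗ op12 α ∘ₗ G.φ2)
    {f g : A ⊗[ℂ] (A ⊗[ℂ] X) →ₗ[ℂ] A ⊗[ℂ] Y}
    (h : ∀ t, m₁ (◁f (head₂₂ α (◁φ₁ t))) = m₁ (◁g (head₂₂ α (◁φ₁ t)))) : f = g := by
  have h (t : A ⊗[ℂ] (A ⊗[ℂ] X)) : f (τ⁻₁ t) = g (τ⁻₁ t) := by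
    refine G.eq_of_id_conv_eq (f := f ∘ₗ τ⁻₁) (g := g ∘ₗ τ⁻₁) (fun t => ?_) t
    obtain ⟨t, rfl⟩ := head₂₂_surjective hs t
    have h := h t
    rwa [← whisker₂₀ G.secondaryInv_secondary (head₂₂ α (◁φ₁ t)), ← G.comul_head hφ,
      ← lTensor_comp_apply, ← lTensor_comp_apply] at h
  refine LinearMap.ext fun t => ?_
  rw [← G.secondaryInv_secondary t, h]

theorem mulBraidComul_head_secondary (hs : Function.Surjective α)
    (hm : α ∘ₗ m23 = m12 ∘ₗ op23 α ∘ₗ op12 α)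
    (hφ : G.φ1 ∘ₗ α = op23 G.τ ∘ₗ op12 α ∘ₗ G.φ2) (t : A ⊗[ℂ] (A ⊗[ℂ] (A ⊗[ℂ] X))) :
    G.mulBraidComul (◁(head₂₂ α) (τ₁ t)) = ◁τ₁ (head₂₂ α (◁G.mulBraidComul t)) := by
  have head_comul (t : A ⊗[ℂ] (A ⊗[ℂ] X)) :
      head₂₂ α (◁φ₁ t) = ◁τ⁻₁ (φ₁ (head₂₂ α t)) := by
    rw [G.comul_head hφ, whisker₂₀ G.secondaryInv_secondary]
  have mulBraidComul_whisker : ◁G.mulBraidComul t = ◁◁m₁ (◁σ₁ (◁◁φ₁ t)) := by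
    simp only [mulBraidComul, lTensor_comp, comp_apply]
  have key := LinearMap.congr_fun (G.eq_of_mul_head_comul (X := A ⊗[ℂ] X) hs hφ
    (f := ◁m₁ ∘ₗ ◁◁τ₁ ∘ₗ σ₁ ∘ₗ ◁(head₂₂ α) ∘ₗ τ₁ ∘ₗ ◁◁φ₁)
    (g := ◁m₁ ∘ₗ ◁◁τ₁ ∘ₗ ◁τ₁ ∘ₗ head₂₂ α ∘ₗ ◁σ₁ ∘ₗ ◁◁φ₁)
    fun t => by
      simp only [lTensor_comp, comp_apply]
      rw [← G.comul_head_mul_left hm hφ, G.comul_head_mul_right hm hφ]) t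
  simp only [comp_apply] at key
  rw [mulBraidComul_whisker, head₂₂_lTensor, whisker₂₃ G.secondary_mul_right, ← key,
    head₂₂_lTensor, whisker₂₃ head_comul, head₂₂_lTensor,
    whisker₂₀ (whisker₂₀ G.secondary_secondaryInv), mulBraidComul_apply]

theorem braid_head_secondary (hs : Function.Surjective α)
    (hm : α ∘ₗ m23 = m12 ∘ₗ op23 α ∘ₗ op12 α)
    (hφ : G.φ1 ∘ₗ α = op23 G.τ ∘ₗ op12 α ∘ₗ G.φ2) (t : A ⊗[ℂ] (A ⊗[ℂ] (A ⊗[ℂ] X))) :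
    σ₁ (◁(head₂₂ α) (τ₁ t)) = ◁τ₁ (head₂₂ α (◁σ₁ t)) := by
  have braid_whisker : ◁σ₁ t = ◁◁m₁ (◁◁◁κ₁ (◁G.mulBraidComul (◁◁φ₁ t))) := by
    have h := whisker₁₁ (a := ◁m₁ ∘ₗ ◁◁κ₁ ∘ₗ G.mulBraidComul ∘ₗ ◁φ₁) (a' := σ₁)
      G.mul_antipode_mulBraidComul_comul t
    simpa only [lTensor_comp, comp_apply] using h.symm
  rw [braid_whisker, head₂₂_lTensor, whisker₂₃ G.secondary_mul_right, head₂₂_lTensor,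
    whisker₂₂ (head₂₂_lTensor G.τ κ₁), whisker₂₂ (whisker₂₂ G.secondary_lTensor_antipode),
    ← G.mulBraidComul_head_secondary hs hm hφ, ← mulBraidComul_lTensor, head₂₂_lTensor,
    whisker₃₂ fun t => (G.comul_head hφ t).symm, mul_antipode_mulBraidComul_comul]

end MixedBraid

theorem braid_braid_secondary (t : A ⊗[ℂ] (A ⊗[ℂ] (A ⊗[ℂ] X))) :
    σ₁ (◁σ₁ (τ₁ t)) = ◁τ₁ (σ₁ (◁σ₁ t)) :=
  G.braid_head_secondary (fun u => ⟨G.σ' u, LinearMap.congr_fun G.σ_comp u⟩) G.braid_mul_right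
    G.comul_comp_braid t

theorem braid_secondary_secondary (t : A ⊗[ℂ] (A ⊗[ℂ] (A ⊗[ℂ] X))) :
    σ₁ (◁τ₁ (τ₁ t)) = ◁τ₁ (τ₁ (◁σ₁ t)) :=
  G.braid_head_secondary G.secondary_surjective G.secondary_comp_mul_right
    G.comul_comp_secondary t

section Assembly

/-- `σ` on the first two strands, as an automorphism. -/
def braidEquiv : A ⊗[ℂ] (A ⊗[ℂ] X) ≃ₗ[ℂ] A ⊗[ℂ] (A ⊗[ℂ] X) :=
  .ofLinearMap σ₁ σ⁻₁ (LinearMap.ext G.braid_braidInv) (LinearMap.ext G.braidInv_braid)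

/-- `τ` on the first two strands, as an automorphism. -/
def secondaryEquiv : A ⊗[ℂ] (A ⊗[ℂ] X) ≃ₗ[ℂ] A ⊗[ℂ] (A ⊗[ℂ] X) :=
  .ofLinearMap τ₁ τ⁻₁ (LinearMap.ext G.secondary_secondaryInv)
    (LinearMap.ext G.secondaryInv_secondary)

theorem braidInv_secondary (t : A ⊗[ℂ] (A ⊗[ℂ] X)) : σ⁻₁ (τ₁ t) = G.contract G.counitMul t := by
  rw [secondary_eq_braid_contract, braidInv_braid]

theorem secondary_braidInv (t : A ⊗[ℂ] (A ⊗[ℂ] X)) :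
    τ₁ (σ⁻₁ t) = G.contract G.counitBraidInv t := by
  rw [secondary_eq_contract_braid, braid_braidInv]

theorem braidingPair :
    BraidingPair (H := A ⊗[ℂ] (A ⊗[ℂ] (A ⊗[ℂ] X)) ≃ₗ[ℂ] A ⊗[ℂ] (A ⊗[ℂ] (A ⊗[ℂ] X)))
      G.braidEquiv (G.braidEquiv.lTensor A) G.secondaryEquiv (G.secondaryEquiv.lTensor A) where
  braid_braid_secondary := LinearEquiv.ext G.braid_braid_secondary
  braid_secondary_secondary := LinearEquiv.ext G.braid_secondary_secondary
  semiconj₂₁ := LinearEquiv.ext fun t => by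
    change ◁τ₁ (τ₁ (◁σ⁻₁ (◁τ₁ t))) = σ⁻₁ (τ₁ (◁τ₁ (τ₁ t)))
    rw [whisker₂₁ G.braidInv_secondary, braidInv_secondary,
      contract_counitMul_secondary_secondary]
  semiconj₁₂ := LinearEquiv.ext fun t => by
    change τ₁ (◁τ₁ (σ⁻₁ (τ₁ t))) = ◁σ⁻₁ (◁τ₁ (τ₁ (◁τ₁ t)))
    rw [whisker₂₁ G.braidInv_secondary, braidInv_secondary,
      lTensor_contract_counitMul_secondary_secondary]
  commute_right_right := LinearEquiv.ext fun t => by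
    change τ₁ (σ⁻₁ (◁τ₁ (◁σ⁻₁ t))) = ◁τ₁ (◁σ⁻₁ (τ₁ (σ⁻₁ t)))
    simp only [whisker₂₁ G.secondary_braidInv, secondary_braidInv, contract_lTensor_contract]
  commute_left_right := LinearEquiv.ext fun t => by
    change σ⁻₁ (τ₁ (◁τ₁ (◁σ⁻₁ t))) = ◁τ₁ (◁σ⁻₁ (σ⁻₁ (τ₁ t)))
    simp only [whisker₂₁ G.secondary_braidInv, braidInv_secondary, contract_lTensor_contract]
  commute_right_left := LinearEquiv.ext fun t => by
    change τ₁ (σ⁻₁ (◁σ⁻₁ (◁τ₁ t))) = ◁σ⁻₁ (◁τ₁ (τ₁ (σ⁻₁ t)))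
    simp only [whisker₂₁ G.braidInv_secondary, secondary_braidInv, contract_lTensor_contract]

end Assembly

end BQG

/-- The braiding `σ` and the secondary braiding `τ` satisfy the full system of
braid equations (247)–(254). -/
theorem bqg_braid_system {A : Type*} [Ring A] [Algebra ℂ A] (G : BQG A) :
    op12 G.σ ∘ₗ op23 G.σ ∘ₗ op12 G.σ = op23 G.σ ∘ₗ op12 G.σ ∘ₗ op23 G.σ ∧
    op12 G.τ ∘ₗ op23 G.σ ∘ₗ op12 G.σ = op23 G.σ ∘ₗ op12 G.σ ∘ₗ op23 G.τ ∧
    op12 G.σ ∘ₗ op23 G.τ ∘ₗ op12 G.σ = op23 G.σ ∘ₗ op12 G.τ ∘ₗ op23 G.σ ∧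
    op12 G.σ ∘ₗ op23 G.σ ∘ₗ op12 G.τ = op23 G.τ ∘ₗ op12 G.σ ∘ₗ op23 G.σ ∧
    op12 G.τ ∘ₗ op23 G.τ ∘ₗ op12 G.σ = op23 G.σ ∘ₗ op12 G.τ ∘ₗ op23 G.τ ∧
    op12 G.τ ∘ₗ op23 G.σ ∘ₗ op12 G.τ = op23 G.τ ∘ₗ op12 G.σ ∘ₗ op23 G.τ ∧
    op12 G.σ ∘ₗ op23 G.τ ∘ₗ op12 G.τ = op23 G.τ ∘ₗ op12 G.τ ∘ₗ op23 G.σ ∧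
    op12 G.τ ∘ₗ op23 G.τ ∘ₗ op12 G.τ = op23 G.τ ∘ₗ op12 G.τ ∘ₗ op23 G.τ := by
  have h := G.braidingPair (X := ℂ)
  exact ⟨
    BQG.op_braid_of_head (LinearEquiv.congr_fun h.braid_braid_braid),
    BQG.op_braid_of_head (LinearEquiv.congr_fun h.secondary_braid_braid),
    BQG.op_braid_of_head (LinearEquiv.congr_fun h.braid_secondary_braid),
    BQG.op_braid_of_head (LinearEquiv.congr_fun h.braid_braid_secondary),
    BQG.op_braid_of_head (LinearEquiv.congr_fun h.secondary_secondary_braid),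
    BQG.op_braid_of_head (LinearEquiv.congr_fun h.secondary_braid_secondary),
    BQG.op_braid_of_head (LinearEquiv.congr_fun h.braid_secondary_secondary),
    BQG.op_braid_of_head (LinearEquiv.congr_fun h.secondary_secondary_secondary)⟩
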